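/- arXiv:1310.5626 — 11 statements merged into one kernel-verified Lean document; each statement's English description precedes it below -/
import Mathlib

section
/- For all integers n and k with 1 ≤ k ≤ n, the sum over all k-tuples (n_1, …, n_k) of positive integers with n_1 + ⋯ + n_k = n of the product ∏_{j=1}^k n_j^{n_j−1}/n_j! equals k · n^{n−k−1}/(n−k)!, where n^{n−k−1} is interpreted as the real power (the exponent is negative only when k = n). -/
/-!
Put `A₀(x) = 1` and `Aₘ(x) = x (x + m)^(m-1) / m!`, the Abel polynomials divided by `m!`.
With `m = n_j - 1` one has `Aₘ(1) = n_j^(n_j - 1) / n_j!`, while for `m = n - k` one has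
`Aₘ(k) = k n^(n-k-1) / (n-k)!`. Hence the claim compares the coefficients of `z^(n-k)` in
`F 1 ^ k = F k`, where `F x = ∑ Aₘ(x) z^m`.

This follows from Abel's identity `F (x + y) = F x * F y`, that is
`Aₘ(x + y) = ∑_{i+j=m} Aᵢ(x) Aⱼ(y)`. Since `Aₘ₊₁'(x) = Aₘ(x + 1)`, the derivatives in `x` of the
two sides agree by induction on `m`, and at `x = 0` both sides equal `Aₘ(y)`.
-/

open Polynomial in
/-- The normalized Abel polynomial `x (x + m)^(m-1) / m!`, with value `1` for `m = 0`. -/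
noncomputable def abelPoly : ℕ → ℝ[X]
  | 0 => 1
  | m + 1 => C ((Nat.factorial (m + 1) : ℝ)⁻¹) * (X * (X + C ((m : ℝ) + 1)) ^ m)

open Polynomial in
lemma derivative_abelPoly_succ (m : ℕ) :
    derivative (abelPoly (m + 1)) = (abelPoly m).comp (X + 1) := by
  cases m with
  | zero => simp [abelPoly]
  | succ m =>
    have h : (C ((Nat.factorial (m + 1) : ℝ)⁻¹) : ℝ[X])
        = C ((Nat.factorial (m + 1 + 1) : ℝ)⁻¹) * ((m : ℝ[X]) + 2) := by
      rw [← C_eq_natCast, ← C_ofNat, ← C_add, ← C_mul]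
      congr 1
      rw [Nat.factorial_succ (m + 1)]
      have := Nat.factorial_ne_zero (m + 1)
      push_cast
      field_simp
      ring
    simp only [abelPoly]
    rw [h]
    simp [derivative_pow]
    ring

open Polynomial in
lemma abelPoly_comp_add (y : ℝ) (m : ℕ) :
    (abelPoly m).comp (X + C y)
      = ∑ p ∈ Finset.HasAntidiagonal.antidiagonal m, abelPoly p.1 * C ((abelPoly p.2).eval y) := by
  induction m with
  | zero => simp [abelPoly]
  | succ m ih =>
    rw [← sub_eq_zero]
    set P := (abelPoly (m + 1)).comp (X + C y) - ∑ p ∈ Finset.HasAntidiagonal.antidiagonal (m + 1),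
      abelPoly p.1 * C ((abelPoly p.2).eval y) with hP
    have hd : derivative P = 0 := by
      have ih' := congrArg (compRingHom (X + 1)) ih
      rw [hP, Finset.Nat.sum_antidiagonal_succ]
      simp only [derivative_sub, derivative_comp, derivative_add, derivative_sum, derivative_mul,
        derivative_abelPoly_succ, derivative_C, derivative_X, mul_zero, add_zero]
      simp only [map_sum, coe_compRingHom_apply, comp_assoc, mul_comp, C_comp, add_comp, X_comp,
        one_comp] at ih' ⊢
      rw [← ih']
      simp [abelPoly, add_right_comm]
    have h0 : P.eval 0 = 0 := by
      rw [hP, Finset.Nat.sum_antidiagonal_succ]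
      simp [abelPoly, eval_finsetSum]
    rw [eq_C_of_derivative_eq_zero hd] at h0 ⊢
    simpa using h0

/-- The generating function `∑ₘ Aₘ(x) zᵐ` of the normalized Abel polynomials at `x`. -/
noncomputable def abelSeries (x : ℝ) : PowerSeries ℝ :=
  PowerSeries.mk fun m => (abelPoly m).eval x

lemma abelSeries_add (x y : ℝ) : abelSeries (x + y) = abelSeries x * abelSeries y := by
  ext m
  have h := congrArg (Polynomial.eval x) (abelPoly_comp_add y m)
  simpa [abelSeries, PowerSeries.coeff_mul, Polynomial.eval_finsetSum] using h

lemma abelSeries_zero : abelSeries 0 = 1 := by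
  ext m
  cases m <;> simp [abelSeries, abelPoly, PowerSeries.coeff_one]

lemma abelSeries_natCast (k : ℕ) : abelSeries k = ∏ _j : Fin k, abelSeries 1 := by
  rw [Finset.prod_const, Finset.card_univ, Fintype.card_fin]
  induction k with
  | zero => simp [abelSeries_zero]
  | succ k ih => rw [Nat.cast_succ, abelSeries_add, ih, pow_succ]

lemma eval_one_abelPoly (m : ℕ) :
    (abelPoly m).eval 1 = ((m + 1 : ℕ) : ℝ) ^ m / (Nat.factorial (m + 1) : ℝ) := by
  cases m with
  | zero => simp [abelPoly]
  | succ m =>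
    have := Nat.factorial_ne_zero (m + 1)
    rw [Nat.factorial_succ (m + 1)]
    simp only [abelPoly, Polynomial.eval_mul, Polynomial.eval_C, Polynomial.eval_X,
      Polynomial.eval_pow, Polynomial.eval_add]
    push_cast
    field_simp
    ring

lemma eval_natCast_abelPoly (k m : ℕ) (hk : 1 ≤ k) :
    (abelPoly m).eval (k : ℝ)
      = (k : ℝ) * ((k + m : ℕ) : ℝ) ^ ((m : ℤ) - 1) / (Nat.factorial m : ℝ) := by
  cases m with
  | zero =>
    have : (k : ℝ) ≠ 0 := by positivity
    simp [abelPoly, this]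
  | succ m =>
    rw [show ((m + 1 : ℕ) : ℤ) - 1 = (m : ℤ) by push_cast; ring, zpow_natCast]
    simp [abelPoly]
    ring

/-- Subtracting `1` from every part identifies the compositions of `k + m` into `k` positive parts
with the `k`-tuples of natural numbers of sum `m`. -/
noncomputable def shiftEquiv (k m : ℕ) :
    (Finset.finsuppAntidiag (Finset.univ : Finset (Fin k)) m) ≃
      {f : Fin k → ℕ // (∀ j, 1 ≤ f j) ∧ ∑ j, f j = k + m} where
  toFun l := ⟨fun j => l.1 j + 1, fun j => Nat.le_add_left 1 _, by
    have h := (Finset.mem_finsuppAntidiag.1 l.2).1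
    rw [Finset.sum_add_distrib, h]
    simp [add_comm]⟩
  invFun f := ⟨Finsupp.equivFunOnFinite.symm fun j => f.1 j - 1, by
    rw [Finset.mem_finsuppAntidiag]
    refine ⟨?_, Finset.subset_univ _⟩
    have h : ∑ j, (f.1 j - 1 + 1) = k + m :=
      (Finset.sum_congr rfl fun j _ => Nat.sub_add_cancel (f.2.1 j)).trans f.2.2
    rw [Finset.sum_add_distrib] at h
    simp at h ⊢
    omega⟩
  left_inv l := by
    ext j
    simp
  right_inv f := by
    ext j
    simpa using Nat.sub_add_cancel (f.2.1 j)

theorem stmt0 (n k : ℕ) (hk : 1 ≤ k) (hkn : k ≤ n) :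
    ∑' f : {f : Fin k → ℕ // (∀ j, 1 ≤ f j) ∧ ∑ j, f j = n},
      ∏ j, ((f.1 j : ℝ) ^ (f.1 j - 1) / (Nat.factorial (f.1 j) : ℝ))
    = (k : ℝ) * (n : ℝ) ^ ((n : ℤ) - (k : ℤ) - 1) / (Nat.factorial (n - k) : ℝ) := by
  obtain ⟨m, rfl⟩ := Nat.exists_eq_add_of_le hkn
  have h := congrArg (PowerSeries.coeff m) (abelSeries_natCast k)
  rw [PowerSeries.coeff_prod] at h
  simp only [abelSeries, PowerSeries.coeff_mk, eval_one_abelPoly,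
    eval_natCast_abelPoly k m hk] at h
  rw [show ((k + m : ℕ) : ℤ) - (k : ℤ) - 1 = (m : ℤ) - 1 by push_cast; ring,
    Nat.add_sub_cancel_left, h, ← (shiftEquiv k m).tsum_eq]
  exact Finset.tsum_subtype (Finset.finsuppAntidiag Finset.univ m)
    fun l : Fin k →₀ ℕ => ∏ j, (((l j + 1 : ℕ) : ℝ) ^ (l j) / (Nat.factorial (l j + 1) : ℝ))
end

section
/- For every real z with 0 < z ≤ 1, the series ∑_{n=1}^∞ e^{−nz} (nz)^{n−1}/n! equals 1. -/
/-!
Write `c m = (m + 1) ^ m / (m + 1)!` and `H x = ∑ c m * x ^ m`. The sum in question is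
`e ^ (-z) * H (z * e ^ (-z))`, so the claim is the functional equation
`H (z * e ^ (-z)) = e ^ z` for `0 < z ≤ 1`, proved in three ranges of `z`.

* For `0 < z < 1/8` the exponentials can be expanded and the resulting double series, which
  converges absolutely, rearranged in powers of `z` (`tsum_borel_of_small`). The coefficient of
  `z ^ N` with `N ≥ 1` is, up to a factor `(N + 1)!`, the `(N + 1)`-st finite difference at `0` of
  `j ↦ j ^ N`, hence vanishes (`coeff_eq_zero`).
* Since `c m ≤ e ^ (m + 1)`, `H` is analytic on the disc of radius `1 / e`, and `z * e ^ (-z) < 1 / e`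
  for `0 < z < 1`. The identity theorem extends the functional equation to `(0, 1)`.
* At `z = 1` the coefficients being nonnegative gives both inequalities: partial sums at `1 / e`
  are limits of partial sums at `z * e ^ (-z)`, hence at most `e`, while `H (1 / e)` dominates
  `H (z * e ^ (-z)) = e ^ z` for every `z < 1`.
-/

open Finset Filter Topology

/-- The coefficient `(m + 1) ^ m / (m + 1)!`; it is the coefficient of `x ^ (m + 1)` in the tree
function, the inverse of `z ↦ z * e ^ (-z)` near `0`. -/
noncomputable def borelCoeff (m : ℕ) : ℝ := ((m : ℝ) + 1) ^ m / (Nat.factorial (m + 1) : ℝ)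

lemma borelCoeff_nonneg (m : ℕ) : 0 ≤ borelCoeff m := by
  unfold borelCoeff; positivity

/-- This is `n ^ n / n! ≤ e ^ n` for `n = m + 1`, divided by `n ≥ 1`. -/
lemma borelCoeff_le (m : ℕ) : borelCoeff m ≤ Real.exp 1 * Real.exp 1 ^ m := by
  have h1 := Real.pow_div_factorial_le_exp ((m : ℝ) + 1) (by positivity) (m + 1)
  have h2 : Real.exp 1 * Real.exp 1 ^ m = Real.exp ((m : ℝ) + 1) := by
    rw [← Real.exp_nat_mul, ← Real.exp_add]; ring_nf
  rw [h2]
  refine le_trans ?_ h1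
  unfold borelCoeff
  gcongr
  · simp
  · exact Nat.le_succ m

lemma term_eq (z : ℝ) (m : ℕ) :
    Real.exp (-(((m : ℝ) + 1) * z)) * (((m : ℝ) + 1) * z) ^ m / (Nat.factorial (m + 1) : ℝ)
      = Real.exp (-z) * (borelCoeff m * (z * Real.exp (-z)) ^ m) := by
  have : Real.exp (-(((m : ℝ) + 1) * z)) = Real.exp (-z) * Real.exp (-z) ^ m := by
    rw [← Real.exp_nat_mul, ← Real.exp_add]; ring_nf
  rw [this, borelCoeff, mul_pow, mul_pow]
  ring

/-- After multiplication by `(N + 2)!` the sum is the `(N + 2)`-nd finite difference at `0` of a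
monomial of degree `N + 1`. -/
lemma coeff_eq_zero (N : ℕ) :
    ∑ p ∈ antidiagonal (N + 1), ((p.1 : ℝ) + 1) ^ (N + 1) * (-1) ^ p.2 /
      ((Nat.factorial (p.1 + 1) : ℝ) * Nat.factorial p.2) = 0 := by
  have h := congrFun (fwdDiff_iter_pow_eq_zero_of_lt (R := ℝ) (Nat.lt_succ_self (N + 1))) 0
  rw [fwdDiff_iter_eq_sum_shift, Finset.sum_range_succ'] at h
  -- the `j = 0` term vanishes because the exponent `N + 1` is positive
  simp only [zero_smul, add_zero, Pi.zero_apply,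
    zero_pow (Nat.succ_ne_zero N), smul_zero] at h
  rw [Finset.Nat.sum_antidiagonal_eq_sum_range_succ_mk]
  have hf : (Nat.factorial (N + 2) : ℝ) ≠ 0 := by positivity
  apply mul_left_cancel₀ hf
  rw [mul_zero, ← h, Finset.mul_sum]
  refine Finset.sum_congr rfl fun k hk => ?_
  have hk' : k + 1 ≤ N + 2 := by have := Finset.mem_range.1 hk; omega
  have hch := Nat.choose_mul_factorial_mul_factorial hk'
  have hs : N + 2 - (k + 1) = N + 1 - k := by omega
  rw [hs] at hch
  have hch' : (Nat.factorial (N + 2) : ℝ) =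
      (Nat.choose (N + 2) (k + 1) : ℝ) * Nat.factorial (k + 1) * Nat.factorial (N + 1 - k) := by
    exact_mod_cast hch.symm
  have h1 : (Nat.factorial (k + 1) : ℝ) ≠ 0 := by positivity
  have h2 : (Nat.factorial (N + 1 - k) : ℝ) ≠ 0 := by positivity
  have hs' : (N + 1).succ - (k + 1) = N + 1 - k := by omega
  rw [hch', hs']
  simp only [zsmul_eq_mul, nsmul_eq_mul]
  push_cast
  field_simp
  ring

/-- The general term of the double series obtained by expanding `e ^ (-(m + 1) z)`. -/
noncomputable def borelDouble (z : ℝ) (p : ℕ × ℕ) : ℝ :=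
  (borelCoeff p.1 * z ^ p.1) * ((-(((p.1 : ℝ) + 1) * z)) ^ p.2 / (Nat.factorial p.2 : ℝ))

lemma hasSum_exp_real (x : ℝ) : HasSum (fun k : ℕ => x ^ k / (Nat.factorial k : ℝ)) (Real.exp x) := by
  rw [Real.exp_eq_exp_ℝ]; exact NormedSpace.expSeries_div_hasSum_exp x

/-- Absolute convergence only needs `z * e ^ (z + 1) < 1`; the bound `1/8` is a convenient one. -/
lemma summable_borelDouble {z : ℝ} (h0 : 0 < z) (h1 : z < 1 / 8) : Summable (borelDouble z) := by
  apply Summable.of_norm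
  have hn : ∀ p : ℕ × ℕ, ‖borelDouble z p‖ =
      (borelCoeff p.1 * z ^ p.1) * ((((p.1 : ℝ) + 1) * z) ^ p.2 / (Nat.factorial p.2 : ℝ)) := by
    intro p
    have hz : |((p.1 : ℝ) + 1) * z| = ((p.1 : ℝ) + 1) * z := abs_of_nonneg (by positivity)
    rw [borelDouble, Real.norm_eq_abs, abs_mul, abs_div, abs_pow, abs_neg, hz, Nat.abs_cast,
      abs_of_nonneg (mul_nonneg (borelCoeff_nonneg _) (by positivity))]
  have hs : ∀ m : ℕ, HasSum (fun k => ‖borelDouble z (m, k)‖)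
      ((borelCoeff m * z ^ m) * Real.exp (((m : ℝ) + 1) * z)) := by
    intro m
    simp only [hn]
    exact (hasSum_exp_real _).mul_left _
  refine (summable_prod_of_nonneg (fun p => norm_nonneg _)).2 ⟨fun m => (hs m).summable, ?_⟩
  simp only [fun m => (hs m).tsum_eq]
  have hlt : Real.exp 1 * (z * Real.exp z) < 1 := by
    have e1 : Real.exp z ≤ Real.exp 1 := Real.exp_le_exp.2 (by linarith)
    have e2 := Real.exp_one_lt_d9
    have e3 := Real.exp_pos 1
    have e4 : z * Real.exp z ≤ 1 / 8 * Real.exp 1 := by gcongr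
    nlinarith
  have hg := (summable_geometric_of_lt_one (by positivity) hlt).mul_left
    (Real.exp 1 * Real.exp z)
  refine Summable.of_nonneg_of_le (fun m => ?_) (fun m => ?_) hg
  · have := borelCoeff_nonneg m
    positivity
  · have he : Real.exp (((m : ℝ) + 1) * z) = Real.exp z * Real.exp z ^ m := by
      rw [← Real.exp_nat_mul, ← Real.exp_add]; ring_nf
    calc (borelCoeff m * z ^ m) * Real.exp (((m : ℝ) + 1) * z)
        ≤ ((Real.exp 1 * Real.exp 1 ^ m) * z ^ m) * Real.exp (((m : ℝ) + 1) * z) := by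
          gcongr; exact borelCoeff_le m
      _ = _ := by rw [he, mul_pow, mul_pow]; ring

lemma sum_antidiagonal_borelDouble (z : ℝ) (N : ℕ) :
    ∑ p ∈ antidiagonal N, borelDouble z p = if N = 0 then 1 else 0 := by
  cases N with
  | zero => simp [borelDouble, borelCoeff]
  | succ N =>
    rw [if_neg (Nat.succ_ne_zero N)]
    have : ∀ p ∈ antidiagonal (N + 1), borelDouble z p = z ^ (N + 1) *
        (((p.1 : ℝ) + 1) ^ (N + 1) * (-1) ^ p.2 /
          ((Nat.factorial (p.1 + 1) : ℝ) * Nat.factorial p.2)) := by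
      intro p hp
      rw [← mem_antidiagonal.1 hp, borelDouble, borelCoeff, neg_pow, mul_pow, pow_add, pow_add]
      field_simp
    rw [Finset.sum_congr rfl this, ← Finset.mul_sum, coeff_eq_zero, mul_zero]

lemma tsum_borel_of_small {z : ℝ} (h0 : 0 < z) (h1 : z < 1 / 8) :
    ∑' m : ℕ, borelCoeff m * (z * Real.exp (-z)) ^ m = Real.exp z := by
  have hS := summable_borelDouble h0 h1
  have hin : ∀ m : ℕ, HasSum (fun k => borelDouble z (m, k))
      (Real.exp (-z) * (borelCoeff m * (z * Real.exp (-z)) ^ m)) := by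
    intro m
    have := (hasSum_exp_real (-(((m : ℝ) + 1) * z))).mul_left (borelCoeff m * z ^ m)
    have he : borelCoeff m * z ^ m * Real.exp (-(((m : ℝ) + 1) * z)) =
        Real.exp (-z) * (borelCoeff m * (z * Real.exp (-z)) ^ m) := by
      rw [← term_eq, borelCoeff, mul_pow]
      ring
    rwa [he] at this
  have hrow := hS.hasSum.prod_fiberwise hin
  have hdiag : ∑' p, borelDouble z p = 1 := by
    rw [← Finset.HasAntidiagonal.sigmaAntidiagonalEquivProd.tsum_eq (borelDouble z)]
    have hS' : Summable fun c : (Σ n : ℕ, antidiagonal n) =>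
        borelDouble z (Finset.HasAntidiagonal.sigmaAntidiagonalEquivProd c) :=
      Finset.HasAntidiagonal.sigmaAntidiagonalEquivProd.summable_iff.2 hS
    rw [hS'.tsum_sigma' fun n => (hasSum_fintype _).summable]
    have : ∀ N : ℕ, ∑' p : antidiagonal N, borelDouble z
        (Finset.HasAntidiagonal.sigmaAntidiagonalEquivProd ⟨N, p⟩) = if N = 0 then 1 else 0 := by
      intro N
      rw [← sum_antidiagonal_borelDouble z N, tsum_fintype]
      exact Finset.sum_coe_sort (antidiagonal N) (borelDouble z)
    simp only [this, tsum_ite_eq]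
  have h2 := hrow.tsum_eq
  rw [hdiag, tsum_mul_left, Real.exp_neg] at h2
  have := Real.exp_pos z
  rw [Real.exp_neg]
  field_simp at h2 ⊢
  linarith

/-- The sum `H x = ∑ c m * x ^ m` is analytic on the ball of radius `1 / e`. -/
lemma hasFPowerSeriesOnBall_borel :
    HasFPowerSeriesOnBall (fun x : ℝ => ∑' m : ℕ, borelCoeff m * x ^ m)
      (FormalMultilinearSeries.ofScalars ℝ borelCoeff) 0
      ((Real.exp (-1)).toNNReal : ENNReal) := by
  have hr : ((Real.exp (-1)).toNNReal : ENNReal) ≤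
      (FormalMultilinearSeries.ofScalars ℝ borelCoeff).radius := by
    refine FormalMultilinearSeries.le_radius_of_bound _ (Real.exp 1) fun m => ?_
    rw [Real.coe_toNNReal _ (Real.exp_pos _).le, FormalMultilinearSeries.ofScalars_norm,
      Real.norm_of_nonneg (borelCoeff_nonneg m)]
    calc borelCoeff m * Real.exp (-1) ^ m
        ≤ (Real.exp 1 * Real.exp 1 ^ m) * Real.exp (-1) ^ m := by
          gcongr; exact borelCoeff_le m
      _ = Real.exp 1 := by rw [mul_assoc, ← mul_pow, ← Real.exp_add]; simp
  have hpos : (0 : ENNReal) < ((Real.exp (-1)).toNNReal : ENNReal) := by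
    rw [ENNReal.coe_pos, Real.toNNReal_pos]
    exact Real.exp_pos (-1)
  have h := ((FormalMultilinearSeries.ofScalars ℝ borelCoeff).hasFPowerSeriesOnBall
    (hpos.trans_le hr)).mono hpos hr
  have he : (FormalMultilinearSeries.ofScalars ℝ borelCoeff).sum =
      fun x : ℝ => ∑' m : ℕ, borelCoeff m * x ^ m := by
    funext x
    exact FormalMultilinearSeries.ofScalars_sum_eq borelCoeff x
  rwa [he] at h

lemma mul_exp_neg_lt {z : ℝ} (h1 : z < 1) : z * Real.exp (-z) < Real.exp (-1) := by
  have h := Real.add_one_lt_exp (x := z - 1) (by linarith)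
  have e : Real.exp (-1) = Real.exp (z - 1) * Real.exp (-z) := by
    rw [← Real.exp_add]; ring_nf
  rw [e]
  have := Real.exp_pos (-z)
  gcongr
  linarith

lemma tsum_borel_of_lt_one {z : ℝ} (h0 : 0 < z) (h1 : z < 1) :
    ∑' m : ℕ, borelCoeff m * (z * Real.exp (-z)) ^ m = Real.exp z := by
  have hA : AnalyticOnNhd ℝ
      (fun z : ℝ => ∑' m : ℕ, borelCoeff m * (z * Real.exp (-z)) ^ m) (Set.Ioo 0 1) := by
    refine AnalyticOnNhd.comp (f := fun z : ℝ => z * Real.exp (-z))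
      hasFPowerSeriesOnBall_borel.analyticOnNhd ?_ ?_
    · intro x _
      exact analyticAt_id.mul (analyticAt_id.neg.rexp)
    · intro x hx
      have hp : 0 ≤ x * Real.exp (-x) := mul_nonneg hx.1.le (Real.exp_pos _).le
      rw [Metric.eball_coe, Metric.mem_ball, dist_zero_right, Real.norm_of_nonneg hp,
        Real.coe_toNNReal _ (Real.exp_pos _).le]
      exact mul_exp_neg_lt hx.2
  have hB : AnalyticOnNhd ℝ Real.exp (Set.Ioo 0 1) := fun x _ => analyticAt_rexp
  refine hA.eqOn_of_preconnected_of_eventuallyEq hB isPreconnected_Ioo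
    (z₀ := 1 / 16) (by norm_num) ?_ ⟨h0, h1⟩
  filter_upwards [Ioo_mem_nhds (show (0 : ℝ) < 1 / 16 by norm_num)
    (show (1 / 16 : ℝ) < 1 / 8 by norm_num)] with x hx
  exact tsum_borel_of_small hx.1 hx.2

lemma summable_borel_of_lt_one {z : ℝ} (h0 : 0 < z) (h1 : z < 1) :
    Summable fun m : ℕ => borelCoeff m * (z * Real.exp (-z)) ^ m := by
  -- a non-summable series would have sum `0`, but the sum is `e ^ z`
  by_contra h
  have := tsum_borel_of_lt_one h0 h1
  rw [tsum_eq_zero_of_not_summable h] at this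
  exact (Real.exp_pos z).ne this

lemma tsum_borel_one :
    ∑' m : ℕ, borelCoeff m * (1 * Real.exp (-1)) ^ m = Real.exp 1 := by
  have hnear : ∀ᶠ z : ℝ in 𝓝[<] 1, 0 < z ∧ z < 1 :=
    Ioo_mem_nhdsLT (by norm_num : (0 : ℝ) < 1)
  have hpart : ∀ n : ℕ,
      ∑ m ∈ range n, borelCoeff m * (1 * Real.exp (-1)) ^ m ≤ Real.exp 1 := by
    intro n
    have hc : Continuous fun z : ℝ => ∑ m ∈ range n, borelCoeff m * (z * Real.exp (-z)) ^ m := by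
      fun_prop
    refine le_of_tendsto ((hc.tendsto 1).mono_left (nhdsWithin_le_nhds (s := Set.Iio 1))) ?_
    filter_upwards [hnear] with z hz
    have h := (summable_borel_of_lt_one hz.1 hz.2).sum_le_tsum (range n) fun m _ =>
      mul_nonneg (borelCoeff_nonneg m)
        (pow_nonneg (mul_nonneg hz.1.le (Real.exp_pos (-z)).le) m)
    rw [tsum_borel_of_lt_one hz.1 hz.2] at h
    exact h.trans (Real.exp_le_exp.2 hz.2.le)
  have hnn : ∀ m : ℕ, 0 ≤ borelCoeff m * (1 * Real.exp (-1)) ^ m := fun m =>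
    mul_nonneg (borelCoeff_nonneg m) (by positivity)
  have hS := summable_of_sum_range_le hnn hpart
  refine le_antisymm (hS.tsum_le_of_sum_range_le hpart) ?_
  refine le_of_tendsto ((Real.continuous_exp.tendsto 1).mono_left
    (nhdsWithin_le_nhds (s := Set.Iio 1))) ?_
  filter_upwards [hnear] with z hz
  rw [← tsum_borel_of_lt_one hz.1 hz.2]
  refine (summable_borel_of_lt_one hz.1 hz.2).tsum_le_tsum (fun m => ?_) hS
  have h1 : 0 ≤ z * Real.exp (-z) := mul_nonneg hz.1.le (Real.exp_pos _).le
  have h2 : z * Real.exp (-z) ≤ 1 * Real.exp (-1) := by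
    rw [one_mul]; exact (mul_exp_neg_lt hz.2).le
  exact mul_le_mul_of_nonneg_left (pow_le_pow_left₀ h1 h2 m) (borelCoeff_nonneg m)


/-- The Borel(z) distribution is a probability distribution for `0 < z ≤ 1`:
`∑_{n=1}^∞ e^(−nz) (nz)^(n−1) / n! = 1` (here the sum is indexed by `n = m + 1`, `m : ℕ`). -/
theorem stmt1 (z : ℝ) (hz0 : 0 < z) (hz1 : z ≤ 1) :
    ∑' m : ℕ, Real.exp (-(((m : ℝ) + 1) * z)) * (((m : ℝ) + 1) * z) ^ m
      / (Nat.factorial (m + 1) : ℝ) = 1 := by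
  simp only [term_eq]
  rw [tsum_mul_left]
  have h : ∑' m : ℕ, borelCoeff m * (z * Real.exp (-z)) ^ m = Real.exp z := by
    rcases hz1.lt_or_eq with h | rfl
    · exact tsum_borel_of_lt_one hz0 h
    · exact tsum_borel_one
  rw [h, ← Real.exp_add, neg_add_cancel, Real.exp_zero]
end

section
/- For every integer k ≥ 1, the series ∑_{n=k}^∞ (k/(n−k)!) e^{−n} n^{n−k−1} equals 1. -/
/-!
Write `a m = x (x + m)^(m-1) / m!` and `G z = ∑ a m z ^ m`. The claim is `G (e⁻¹) = e ^ x` for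
`x = k`, and it holds for every real `x > 0`; it is the value at `μ = 1` of the identity
`G (μ e^{-μ}) = e^{xμ}`, `0 ≤ μ ≤ 1`.

* For `|μ|` small, expand `e^{-μ(x+m)}` in `∑ a m μ^m e^{-μ(x+m)}` and collect powers of `μ` in the
  absolutely convergent double series. The coefficient of `μ^N` with `N ≥ 1` is a multiple of the
  `N`-th forward difference at `x` of the polynomial `t ↦ t^(N-1)`, hence zero, and the constant
  term is `1` (`hasSum_antidiagonal`, `tsum_small`).
* The bound `(x+m)^m / m! ≤ e^{x+m}` shows that `G` has radius of convergence at least `e⁻¹`, and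
  `|μ e^{-μ}| < e⁻¹` for `-1/8 < μ < 1`, so the identity theorem for analytic functions carries
  the identity from a neighbourhood of `0` to `[0, 1)` (`tsum_eq_exp`).
* All `a m` are nonnegative and `μ e^{-μ}` increases to `e⁻¹` as `μ → 1⁻`, so monotone convergence
  gives the value at the boundary point `e⁻¹` (`hasSum_boundary`).
-/

namespace BorelTanner

open Filter Topology Finset Nat

/-- The coefficient `x (x + m)^(m-1) / m!`, written as `x (x + m)^m / (m! (x + m))` so that `m = 0`
needs no separate treatment. -/
noncomputable def a (x : ℝ) (m : ℕ) : ℝ := x * (x + m) ^ m / (m ! * (x + m))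

lemma a_nonneg {x : ℝ} (hx : 0 < x) (m : ℕ) : 0 ≤ a x m := by
  unfold a; positivity

lemma a_le {x : ℝ} (hx : 0 < x) (m : ℕ) : a x m ≤ Real.exp x * Real.exp 1 ^ m := by
  have h := Real.pow_div_factorial_le_exp (x := x + m) (by positivity) m
  have e : a x m = x / (x + m) * ((x + m) ^ m / m !) := by
    unfold a; field_simp
  have h1 : x / (x + m) ≤ 1 := by
    rw [div_le_one (by positivity)]; simp
  rw [e, ← Real.exp_nat_mul, mul_one, ← Real.exp_add]
  calc _ ≤ 1 * ((x + m) ^ m / m !) := by gcongr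
    _ ≤ _ := by rw [one_mul]; exact h

/-- For `|μ| ≤ 1/8` this gives `e |μ| e^{|μ|} < 1/2`, the ratio of the dominating geometric series
for the double sum; it also keeps `μ e^{-μ}` inside the disc of radius `e⁻¹`. -/
lemma exp_mul_exp_lt : Real.exp 1 * Real.exp (1 / 8) < 4 := by
  have h1 := Real.exp_one_lt_d9
  have h2 : Real.exp (1 / 8) ^ 8 < 3 := by
    rw [← Real.exp_nat_mul]; norm_num; linarith
  have h3 : Real.exp (1 / 8) < 5 / 4 := by
    by_contra! h
    have : (5 / 4 : ℝ) ^ 8 ≤ Real.exp (1 / 8) ^ 8 := by gcongr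
    norm_num at this h2
    linarith
  nlinarith [Real.exp_pos 1]

/-- The expanded double series: the `j`-th Taylor term of `e^{-μ(x+m)}` in the `m`-th summand. -/
noncomputable def f (x μ : ℝ) (p : ℕ × ℕ) : ℝ :=
  a x p.1 * μ ^ p.1 * ((-(μ * (x + p.1))) ^ p.2 / p.2 !)

lemma hasSum_exp (t : ℝ) : HasSum (fun j : ℕ => t ^ j / j !) (Real.exp t) := by
  rw [Real.exp_eq_exp_ℝ]
  exact NormedSpace.expSeries_div_hasSum_exp t

lemma summable_f {x μ : ℝ} (hx : 0 < x) (hμ : |μ| ≤ 1 / 8) : Summable (f x μ) := by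
  -- Summing over `j` first turns the absolute values back into an exponential.
  have habs : ∀ p, |f x μ p| = a x p.1 * |μ| ^ p.1 * ((|μ| * (x + p.1)) ^ p.2 / p.2 !) := by
    intro p
    have h1 : |x + (p.1 : ℝ)| = x + p.1 := abs_of_pos (by positivity)
    simp only [f, abs_mul, abs_div, abs_pow, abs_neg, Nat.abs_cast, h1, abs_of_nonneg (a_nonneg hx _)]
  have hs : ∀ m : ℕ, HasSum (fun j => |f x μ (m, j)|)
      (a x m * |μ| ^ m * Real.exp (|μ| * (x + m))) := by
    intro m
    simp only [habs]
    exact (hasSum_exp _).mul_left _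
  rw [← summable_abs_iff, summable_prod_of_nonneg (fun p => abs_nonneg _)]
  refine ⟨fun m => (hs m).summable, ?_⟩
  simp only [fun m => (hs m).tsum_eq]
  have hg : Summable (fun m : ℕ => Real.exp x * Real.exp (|μ| * x) * (1 / 2 : ℝ) ^ m) :=
    (summable_geometric_of_lt_one (by norm_num) (by norm_num)).mul_left _
  refine hg.of_nonneg_of_le (fun m => ?_) (fun m => ?_)
  · have := a_nonneg hx m
    positivity
  · have e : Real.exp (|μ| * (x + m)) = Real.exp (|μ| * x) * Real.exp |μ| ^ m := by
      rw [← Real.exp_nat_mul, ← Real.exp_add]; ring_nf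
    have hq : Real.exp 1 * |μ| * Real.exp |μ| ≤ 1 / 2 := by
      calc Real.exp 1 * |μ| * Real.exp |μ| ≤ Real.exp 1 * (1 / 8) * Real.exp (1 / 8) := by gcongr
        _ ≤ 1 / 2 := by linarith [exp_mul_exp_lt]
    calc a x m * |μ| ^ m * Real.exp (|μ| * (x + m))
        ≤ (Real.exp x * Real.exp 1 ^ m) * |μ| ^ m * Real.exp (|μ| * (x + m)) := by
          gcongr; exact a_le hx m
      _ = Real.exp x * Real.exp (|μ| * x) * (Real.exp 1 * |μ| * Real.exp |μ|) ^ m := by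
          rw [e]; ring
      _ ≤ _ := by gcongr

/-- The coefficient of `μ ^ (M + 1)` is an `(M + 1)`-st difference of `t ↦ t ^ M`. -/
lemma sum_antidiagonal_succ {x : ℝ} (hx : 0 < x) (μ : ℝ) (M : ℕ) :
    ∑ p ∈ antidiagonal (M + 1), f x μ p = 0 := by
  have h := congrFun (fwdDiff_iter_pow_eq_zero_of_lt (R := ℝ) (Nat.lt_succ_self M)) x
  rw [fwdDiff_iter_eq_sum_shift] at h
  rw [Finset.Nat.sum_antidiagonal_eq_sum_range_succ_mk]
  have e : ∀ m ∈ range (M + 1).succ, f x μ (m, M + 1 - m) =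
      (μ ^ (M + 1) * x / (M + 1)!) *
        (((-1 : ℤ) ^ (M.succ - m) * (M.succ.choose m : ℕ)) • (x + m • (1 : ℝ)) ^ M) := by
    intro m hm
    have hm' : m ≤ M + 1 := by simpa [Nat.lt_succ_iff] using hm
    obtain ⟨j, hj⟩ := Nat.exists_eq_add_of_le hm'
    have hj' : M + 1 - m = j := by omega
    have hc : ((M.succ.choose m : ℕ) : ℝ) = (M + 1)! / (m ! * j !) := by
      rw [Nat.succ_eq_add_one, Nat.cast_choose ℝ hm', hj']
    have hxm : x + (m : ℝ) ≠ 0 := by positivity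
    have hpow : (x + (m : ℝ)) ^ m * (x + m) ^ j = (x + m) ^ M * (x + m) := by
      rw [← pow_add, ← hj, pow_succ]
    have hmu : μ ^ (M + 1) = μ ^ m * μ ^ j := by rw [hj, pow_add]
    simp only [zsmul_eq_mul, Int.cast_mul, Int.cast_pow, Int.cast_neg, Int.cast_one,
      Int.cast_natCast, hc, nsmul_eq_mul, mul_one, Nat.succ_eq_add_one, hj', f, a]
    rw [hmu, neg_pow, mul_pow]
    have h1 : ((M + 1)! : ℝ) ≠ 0 := by positivity
    field_simp
    linear_combination μ ^ m * μ ^ j * hpow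
  rw [Finset.sum_congr rfl e, ← Finset.mul_sum]
  rw [Nat.succ_eq_add_one] at h
  simp only [Nat.succ_eq_add_one]
  rw [h]; simp

lemma hasSum_antidiagonal {x μ : ℝ} (hx : 0 < x) :
    HasSum (fun N => ∑ p ∈ antidiagonal N, f x μ p) 1 := by
  have h0 : ∑ p ∈ antidiagonal 0, f x μ p = 1 := by
    simp [f, a, hx.ne']
  rw [← h0]
  refine hasSum_single 0 fun N hN => ?_
  obtain ⟨M, rfl⟩ := Nat.exists_eq_succ_of_ne_zero hN
  exact sum_antidiagonal_succ hx μ M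

lemma tsum_small {x μ : ℝ} (hx : 0 < x) (hμ : |μ| ≤ 1 / 8) :
    ∑' m, a x m * (μ * Real.exp (-μ)) ^ m = Real.exp (x * μ) := by
  have hs := summable_f hx hμ
  have h1 : ∑' p, f x μ p = 1 := by
    rw [← HasAntidiagonal.sigmaAntidiagonalEquivProd.tsum_eq (f x μ),
      Summable.tsum_sigma' (f := fun c => f x μ (HasAntidiagonal.sigmaAntidiagonalEquivProd c))
        (fun n => (hasSum_fintype _).summable)
        (HasAntidiagonal.sigmaAntidiagonalEquivProd.summable_iff.mpr hs)]
    rw [← (hasSum_antidiagonal (μ := μ) hx).tsum_eq]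
    refine tsum_congr fun N => ?_
    rw [tsum_fintype]
    exact Finset.sum_coe_sort (antidiagonal N) (f x μ)
  rw [hs.tsum_prod] at h1
  have h2 : ∀ m : ℕ, ∑' j, f x μ (m, j)
      = Real.exp (-(x * μ)) * (a x m * (μ * Real.exp (-μ)) ^ m) := by
    intro m
    refine ((hasSum_exp (-(μ * (x + m)))).mul_left (a x m * μ ^ m)).tsum_eq.trans ?_
    rw [mul_pow, ← Real.exp_nat_mul, show -(μ * (x + m)) = -(x * μ) + m * -μ by ring, Real.exp_add]
    ring
  simp only [h2] at h1
  rw [tsum_mul_left, Real.exp_neg] at h1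
  field_simp at h1
  exact h1

/-- `G` is analytic on the open ball of radius `e⁻¹`, since `‖a m‖ e^{-m} ≤ e^x` for all `m`. -/
lemma analytic {x : ℝ} (hx : 0 < x) :
    AnalyticOnNhd ℝ (fun z => ∑' m, a x m * z ^ m) {z : ℝ | |z| < Real.exp (-1)} := by
  set p := FormalMultilinearSeries.ofScalars ℝ (a x) with hp
  obtain ⟨r, hre⟩ : ∃ r : NNReal, (r : ℝ) = Real.exp (-1) := ⟨⟨_, (Real.exp_pos _).le⟩, rfl⟩
  have hr : (r : ENNReal) ≤ p.radius := by
    refine p.le_radius_of_bound (Real.exp x) fun n => ?_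
    rw [hp, FormalMultilinearSeries.ofScalars_norm, hre, Real.norm_of_nonneg (a_nonneg hx n)]
    calc a x n * Real.exp (-1) ^ n ≤ Real.exp x * Real.exp 1 ^ n * Real.exp (-1) ^ n := by
          gcongr; exact a_le hx n
      _ = Real.exp x := by
          rw [mul_assoc, ← mul_pow, ← Real.exp_add]; simp
  have hpos : 0 < p.radius := lt_of_lt_of_le (by
    rw [ENNReal.coe_pos, ← NNReal.coe_pos, hre]; exact Real.exp_pos _) hr
  have han := (p.hasFPowerSeriesOnBall hpos).analyticOnNhd
  have hfun : p.sum = fun z => ∑' m, a x m * z ^ m := by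
    funext z
    simp [FormalMultilinearSeries.sum, hp, mul_comm]
  rw [hfun] at han
  refine han.mono fun z hz => ?_
  refine Metric.eball_subset_eball hr ?_
  rw [Metric.eball_coe]
  simpa [hre] using hz

lemma summable_a {x z : ℝ} (hx : 0 < x) (h0 : 0 ≤ z) (hz : z < Real.exp (-1)) :
    Summable (fun m => a x m * z ^ m) := by
  have hq : Real.exp 1 * z < 1 := by
    calc _ < Real.exp 1 * Real.exp (-1) := by gcongr
      _ = 1 := by rw [← Real.exp_add]; simp
  refine ((summable_geometric_of_lt_one (by positivity) hq).mul_left (Real.exp x)).of_nonneg_of_le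
    (fun m => mul_nonneg (a_nonneg hx m) (by positivity)) (fun m => ?_)
  rw [mul_pow, ← mul_assoc]
  gcongr; exact a_le hx m

lemma mul_exp_neg_lt {μ : ℝ} (h : μ < 1) : μ * Real.exp (-μ) < Real.exp (-1) := by
  have h1 := Real.add_one_lt_exp (x := μ - 1) (by linarith)
  calc μ * Real.exp (-μ) < Real.exp (μ - 1) * Real.exp (-μ) := by gcongr; linarith
    _ = Real.exp (-1) := by rw [← Real.exp_add]; ring_nf

lemma tsum_eq_exp {x μ : ℝ} (hx : 0 < x) (h0 : 0 ≤ μ) (h1 : μ < 1) :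
    ∑' m, a x m * (μ * Real.exp (-μ)) ^ m = Real.exp (x * μ) := by
  have hmaps : ∀ ν ∈ Set.Ioo (-(1 / 8) : ℝ) 1, ν * Real.exp (-ν) ∈ {z : ℝ | |z| < Real.exp (-1)} := by
    rintro ν ⟨hl, hu⟩
    refine abs_lt.mpr ⟨?_, mul_exp_neg_lt hu⟩
    rcases le_or_gt 0 ν with h | h
    · have : 0 ≤ ν * Real.exp (-ν) := by positivity
      linarith [Real.exp_pos (-1)]
    · have e1 : -ν * Real.exp (-ν) ≤ 1 / 8 * Real.exp (1 / 8) := by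
        gcongr <;> linarith
      have e2 : 1 / 8 * Real.exp (1 / 8) < Real.exp (-1) := by
        rw [Real.exp_neg, ← one_div, lt_div_iff₀ (Real.exp_pos 1)]
        linarith [exp_mul_exp_lt]
      linarith
  have hA : AnalyticOnNhd ℝ (fun ν : ℝ => ∑' m, a x m * (ν * Real.exp (-ν)) ^ m)
      (Set.Ioo (-(1 / 8) : ℝ) 1) := by
    refine (analytic hx).comp (f := fun ν : ℝ => ν * Real.exp (-ν)) (fun ν _ => ?_) hmaps
    fun_prop
  have hB : AnalyticOnNhd ℝ (fun ν : ℝ => Real.exp (x * ν)) (Set.Ioo (-(1 / 8) : ℝ) 1) := by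
    intro ν _
    fun_prop
  refine hA.eqOn_of_preconnected_of_eventuallyEq hB isPreconnected_Ioo (z₀ := 0) (by norm_num) ?_
    ⟨by linarith, h1⟩
  have hnhds : Set.Ioo (-(1 / 8) : ℝ) (1 / 8) ∈ 𝓝 (0 : ℝ) := Ioo_mem_nhds (by norm_num) (by norm_num)
  filter_upwards [hnhds] with ν hν
  exact tsum_small hx (abs_le.mpr ⟨hν.1.le, hν.2.le⟩)

lemma hasSum_boundary {x : ℝ} (hx : 0 < x) :
    HasSum (fun m => a x m * Real.exp (-1) ^ m) (Real.exp x) := by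
  have hnn : ∀ z : ℝ, 0 ≤ z → ∀ m, 0 ≤ a x m * z ^ m := fun z hz m =>
    mul_nonneg (a_nonneg hx m) (by positivity)
  have hev : ∀ᶠ μ : ℝ in 𝓝[<] 1, 0 < μ ∧ μ < 1 :=
    Ioo_mem_nhdsLT (by norm_num)
  have hlim : Tendsto (fun μ : ℝ => Real.exp (x * μ)) (𝓝[<] 1) (𝓝 (Real.exp x)) := by
    have : Continuous (fun μ : ℝ => Real.exp (x * μ)) := by fun_prop
    simpa using (this.tendsto 1).mono_left nhdsWithin_le_nhds
  -- Each partial sum is continuous in `μ` and bounded by the full sum for `μ < 1`.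
  have hpart : ∀ N, ∑ m ∈ range N, a x m * Real.exp (-1) ^ m ≤ Real.exp x := by
    intro N
    have hc : Continuous (fun μ : ℝ => ∑ m ∈ range N, a x m * (μ * Real.exp (-μ)) ^ m) := by
      fun_prop
    have hl : Tendsto (fun μ : ℝ => ∑ m ∈ range N, a x m * (μ * Real.exp (-μ)) ^ m) (𝓝[<] 1)
        (𝓝 (∑ m ∈ range N, a x m * Real.exp (-1) ^ m)) := by
      simpa using (hc.tendsto 1).mono_left nhdsWithin_le_nhds
    refine le_of_tendsto_of_tendsto hl hlim ?_
    filter_upwards [hev] with μ hμ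
    have h0 : 0 ≤ μ * Real.exp (-μ) := mul_nonneg hμ.1.le (Real.exp_pos _).le
    rw [← tsum_eq_exp hx hμ.1.le hμ.2]
    exact (summable_a hx h0 (mul_exp_neg_lt hμ.2)).sum_le_tsum _ fun m _ => hnn _ h0 m
  have hs := summable_of_sum_range_le (hnn _ (Real.exp_pos (-1)).le) hpart
  have hle := hs.tsum_le_of_sum_range_le hpart
  have hge : Real.exp x ≤ ∑' m, a x m * Real.exp (-1) ^ m := by
    refine le_of_tendsto hlim ?_
    filter_upwards [hev] with μ hμ
    have h0 : 0 ≤ μ * Real.exp (-μ) := mul_nonneg hμ.1.le (Real.exp_pos _).le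
    have hlt := mul_exp_neg_lt hμ.2
    rw [← tsum_eq_exp hx hμ.1.le hμ.2]
    refine (summable_a hx h0 hlt).tsum_le_tsum (fun m => ?_) hs
    have := a_nonneg hx m
    gcongr
  rw [← le_antisymm hle hge]
  exact hs.hasSum

end BorelTanner

/-- The Borel–Tanner(k) distribution is a probability distribution: for every integer
`k ≥ 1`, `∑_{n=k}^∞ (k/(n−k)!) e^(−n) n^(n−k−1) = 1`, where `n^(n−k−1)` is a real
(integer) power (the exponent equals `−1` when `n = k`). Here the sum is indexed by
`n = k + m`, `m : ℕ`. -/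
theorem stmt2 (k : ℕ) (hk : 1 ≤ k) :
    ∑' m : ℕ, (k : ℝ) / (Nat.factorial m : ℝ) * Real.exp (-((k : ℝ) + (m : ℝ)))
      * ((k : ℝ) + (m : ℝ)) ^ ((m : ℤ) - 1) = 1 := by
  have hx : (0 : ℝ) < k := by exact_mod_cast hk
  have h := (BorelTanner.hasSum_boundary hx).mul_left (Real.exp (-(k : ℝ)))
  rw [← Real.exp_add, neg_add_cancel, Real.exp_zero] at h
  rw [← h.tsum_eq]
  refine tsum_congr fun m => ?_
  have hne : (k : ℝ) + m ≠ 0 := by positivity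
  rw [zpow_sub_one₀ hne, zpow_natCast, neg_add, Real.exp_add, ← Real.exp_nat_mul,
    show (m : ℝ) * -1 = -m by ring, BorelTanner.a]
  field_simp
end

section
/- For every real c > 0, the integral ∫_0^1 c (2π x (1−x)^3)^{−1/2} exp(−c^2 x/(2(1−x))) dx equals 1; that is, d_c is a probability density on (0,1). -/
/-!
The substitution `u = c √(x / (1 - x))` is an increasing bijection from `(0, 1)` onto `(0, ∞)`
with `du = (c / 2) x ^ (-1/2) (1 - x) ^ (-3/2) dx`. It therefore turns the integral into that of
the half-normal density `(2 / √(2π)) exp (-u² / 2)` over `(0, ∞)`, which is `1` by the Gaussian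
integral.
-/

open MeasureTheory

theorem hasDerivAt_mul_sqrt_odds (c : ℝ) {x : ℝ} (hx : x ∈ Set.Ioo (0 : ℝ) 1) :
    HasDerivAt (fun x : ℝ => c * Real.sqrt (x / (1 - x)))
      (c / (2 * ((1 - x) ^ 2 * Real.sqrt (x / (1 - x))))) x := by
  have h1 : 0 < 1 - x := by linarith [hx.2]
  have hpos : 0 < x / (1 - x) := div_pos hx.1 h1
  have hs : 0 < Real.sqrt (x / (1 - x)) := Real.sqrt_pos.2 hpos
  have hd := ((((hasDerivAt_id x).div ((hasDerivAt_id x).const_sub 1) h1.ne').sqrt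
    hpos.ne').const_mul c)
  refine hd.congr_deriv ?_
  simp only [id, Pi.div_apply]
  field_simp
  ring

theorem monotoneOn_mul_sqrt_odds {c : ℝ} (hc : 0 < c) :
    MonotoneOn (fun x : ℝ => c * Real.sqrt (x / (1 - x))) (Set.Ioo 0 1) := by
  intro x hx y hy hxy
  have h1 : 0 < 1 - x := by linarith [hx.2]
  have h2 : 0 < 1 - y := by linarith [hy.2]
  refine mul_le_mul_of_nonneg_left (Real.sqrt_le_sqrt ?_) hc.le
  rw [div_le_div_iff₀ h1 h2]
  nlinarith

theorem image_mul_sqrt_odds {c : ℝ} (hc : 0 < c) :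
    (fun x : ℝ => c * Real.sqrt (x / (1 - x))) '' Set.Ioo 0 1 = Set.Ioi 0 := by
  ext u
  constructor
  · rintro ⟨x, hx, rfl⟩
    have h1 : 0 < 1 - x := by linarith [hx.2]
    exact mul_pos hc (Real.sqrt_pos.2 (div_pos hx.1 h1))
  · intro hu
    have hu : 0 < u := hu
    have hd : 0 < c ^ 2 + u ^ 2 := by positivity
    -- The inverse substitution is `u ↦ u² / (c² + u²)`.
    refine ⟨u ^ 2 / (c ^ 2 + u ^ 2), ⟨by positivity, ?_⟩, ?_⟩
    · rw [div_lt_one hd]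
      nlinarith [sq_pos_of_pos hc]
    · have h : u ^ 2 / (c ^ 2 + u ^ 2) / (1 - u ^ 2 / (c ^ 2 + u ^ 2)) = (u / c) ^ 2 := by
        have : 1 - u ^ 2 / (c ^ 2 + u ^ 2) = c ^ 2 / (c ^ 2 + u ^ 2) := by
          field_simp
          ring
        rw [this]
        field_simp
      simp only [h]
      rw [Real.sqrt_sq (by positivity)]
      field_simp

/-- For every `c > 0`, the function `d_c(x) = c (2π x (1−x)^3)^(−1/2) exp(−c² x / (2(1−x)))`
is a probability density on `(0,1)`. -/
theorem stmt3 (c : ℝ) (hc : 0 < c) :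
    ∫ x in Set.Ioo (0 : ℝ) 1,
      c / Real.sqrt (2 * Real.pi * x * (1 - x) ^ 3)
        * Real.exp (-(c ^ 2 * x) / (2 * (1 - x))) = 1 := by
  have hπ : 0 < Real.sqrt (2 * Real.pi) := Real.sqrt_pos.2 (by positivity)
  have key := integral_image_eq_integral_deriv_smul_of_monotoneOn measurableSet_Ioo
    (fun x hx => (hasDerivAt_mul_sqrt_odds c hx).hasDerivWithinAt)
    (monotoneOn_mul_sqrt_odds hc)
    (fun u : ℝ => 2 / Real.sqrt (2 * Real.pi) * Real.exp (-(1 / 2) * u ^ 2))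
  rw [image_mul_sqrt_odds hc, integral_const_mul, integral_gaussian_Ioi] at key
  have hg : 2 / Real.sqrt (2 * Real.pi) * (Real.sqrt (Real.pi / (1 / 2)) / 2) = 1 := by
    rw [show Real.pi / (1 / 2) = 2 * Real.pi by ring]
    field_simp
  refine Eq.trans ?_ (key.symm.trans hg)
  refine setIntegral_congr_fun measurableSet_Ioo fun x hx => ?_
  have hx0 : 0 < x := hx.1
  have h1 : 0 < 1 - x := by linarith [hx.2]
  have hpos : 0 < x / (1 - x) := div_pos hx0 h1
  have hs : 0 < Real.sqrt (x / (1 - x)) := Real.sqrt_pos.2 hpos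
  have hroot : Real.sqrt (2 * Real.pi * x * (1 - x) ^ 3)
      = Real.sqrt (2 * Real.pi) * (Real.sqrt (x / (1 - x)) * (1 - x) ^ 2) := by
    rw [show 2 * Real.pi * x * (1 - x) ^ 3
        = 2 * Real.pi * (x / (1 - x) * ((1 - x) ^ 2) ^ 2) by field_simp,
      Real.sqrt_mul (by positivity), Real.sqrt_mul hpos.le, Real.sqrt_sq (by positivity)]
  have hexp : -(1 / 2) * (c * Real.sqrt (x / (1 - x))) ^ 2
      = -(c ^ 2 * x) / (2 * (1 - x)) := by
    rw [mul_pow, Real.sq_sqrt hpos.le]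
    field_simp
  simp only [smul_eq_mul, hexp, hroot]
  generalize Real.sqrt (x / (1 - x)) = s at hs
  field_simp
end

section
/- For every bounded continuous function f : ℝ → ℝ, the integral ∫_0^1 f(c^2 x) · c (2π x (1−x)^3)^{−1/2} exp(−c^2 x/(2(1−x))) dx converges, as c → ∞, to (2π)^{−1/2} ∫_ℝ f(z^2) e^{−z^2/2} dz. In other words, if D(c) has density d_c then c^2 D(c) converges in distribution to Z^2 as c → ∞, where Z is a standard Gaussian random variable. -/
/-!
The substitution `x = z² / (c² + z²)`, which maps `(0, ∞)` bijectively onto `(0, 1)`, carries the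
density `d_c` to `2 (2π)^(-1/2) e^(-z²/2)`, the density of `|Z|`: in law, `D(c) = Z² / (c² + Z²)`
exactly (`integral_fireproof_eq`). Hence `c² D(c)` has the law of `c² Z² / (c² + Z²)`, which
converges pointwise to `Z²`, and dominated convergence, with a multiple of the Gaussian density
as the bound, gives the limit of the expectations of `f`.
-/

open MeasureTheory Filter

lemma image_Ioi_sq_div_add_sq {c : ℝ} (hc : 0 < c) :
    (fun z : ℝ => z ^ 2 / (c ^ 2 + z ^ 2)) '' Set.Ioi 0 = Set.Ioo 0 1 := by
  ext x
  constructor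
  · rintro ⟨z, hz, rfl⟩
    have hz : 0 < z := hz
    refine ⟨by positivity, ?_⟩
    have : 0 < c ^ 2 := by positivity
    simp only
    rw [div_lt_one (by positivity)]
    linarith
  · rintro ⟨h0, h1⟩
    have h1' : 0 < 1 - x := by linarith
    refine ⟨c * Real.sqrt (x / (1 - x)), ?_, ?_⟩
    · have : 0 < x / (1 - x) := by positivity
      simp only [Set.mem_Ioi]
      positivity
    · simp only
      rw [mul_pow, Real.sq_sqrt (by positivity)]
      field_simp
      ring

lemma injOn_Ioi_sq_div_add_sq {c : ℝ} (hc : 0 < c) :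
    Set.InjOn (fun z : ℝ => z ^ 2 / (c ^ 2 + z ^ 2)) (Set.Ioi 0) := by
  intro a ha b hb h
  have ha : 0 < a := ha
  have hb : 0 < b := hb
  simp only at h
  rw [div_eq_div_iff (by positivity) (by positivity)] at h
  have h2 : c ^ 2 * a ^ 2 = c ^ 2 * b ^ 2 := by linarith
  have h3 : a ^ 2 = b ^ 2 := mul_left_cancel₀ (by positivity) h2
  exact (sq_eq_sq₀ ha.le hb.le).1 h3

lemma hasDerivAt_sq_div_add_sq {c : ℝ} (hc : 0 < c) (z : ℝ) :
    HasDerivAt (fun z : ℝ => z ^ 2 / (c ^ 2 + z ^ 2))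
      (2 * z * c ^ 2 / (c ^ 2 + z ^ 2) ^ 2) z := by
  have h : HasDerivAt (fun z : ℝ => z ^ 2) (2 * z) z := by simpa using hasDerivAt_pow 2 z
  have hne : c ^ 2 + z ^ 2 ≠ 0 := by positivity
  refine (h.div (h.const_add (c ^ 2)) hne).congr_deriv ?_
  congr 1
  ring

/-- The law of `D(c)` is that of `Z² / (c² + Z²)`. -/
lemma integral_fireproof_eq (f : ℝ → ℝ) {c : ℝ} (hc : 0 < c) :
    (∫ x in Set.Ioo (0 : ℝ) 1,
          f (c ^ 2 * x) * (c / Real.sqrt (2 * Real.pi * x * (1 - x) ^ 3)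
            * Real.exp (-(c ^ 2 * x) / (2 * (1 - x))))) =
      (1 / Real.sqrt (2 * Real.pi)) *
        ∫ z : ℝ, f (c ^ 2 * (z ^ 2 / (c ^ 2 + z ^ 2))) * Real.exp (-z ^ 2 / 2) := by
  -- The integrand on the right is even, so it suffices to integrate over `z > 0`.
  have heven := integral_comp_abs
    (f := fun z : ℝ => f (c ^ 2 * (z ^ 2 / (c ^ 2 + z ^ 2))) * Real.exp (-z ^ 2 / 2))
  simp only [sq_abs] at heven
  rw [heven, ← image_Ioi_sq_div_add_sq hc,
    integral_image_eq_integral_abs_deriv_smul measurableSet_Ioi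
      (fun z _ => (hasDerivAt_sq_div_add_sq hc z).hasDerivWithinAt) (injOn_Ioi_sq_div_add_sq hc),
    ← integral_const_mul, ← integral_const_mul]
  refine setIntegral_congr_fun measurableSet_Ioi fun z hz => ?_
  have hz : 0 < z := hz
  have hs : 0 < c ^ 2 + z ^ 2 := by positivity
  have hx : 1 - z ^ 2 / (c ^ 2 + z ^ 2) = c ^ 2 / (c ^ 2 + z ^ 2) := by
    field_simp
    ring
  have hexp : -(c ^ 2 * (z ^ 2 / (c ^ 2 + z ^ 2))) / (2 * (c ^ 2 / (c ^ 2 + z ^ 2)))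
      = -z ^ 2 / 2 := by
    field_simp
  have hsqrt : Real.sqrt (2 * Real.pi * (z ^ 2 / (c ^ 2 + z ^ 2)) * (c ^ 2 / (c ^ 2 + z ^ 2)) ^ 3)
      = Real.sqrt (2 * Real.pi) * (z * c ^ 3 / (c ^ 2 + z ^ 2) ^ 2) := by
    rw [← Real.sqrt_sq (show 0 ≤ z * c ^ 3 / (c ^ 2 + z ^ 2) ^ 2 by positivity),
      ← Real.sqrt_mul (by positivity)]
    congr 1
    field_simp
  have habs : |2 * z * c ^ 2 / (c ^ 2 + z ^ 2) ^ 2| = 2 * z * c ^ 2 / (c ^ 2 + z ^ 2) ^ 2 :=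
    abs_of_pos (by positivity)
  have hpi : 0 < Real.sqrt (2 * Real.pi) := by positivity
  simp only [smul_eq_mul]
  rw [hx, hexp, hsqrt, habs]
  generalize f _ = y
  generalize Real.exp _ = e
  field_simp

lemma tendsto_sq_mul_div_add_sq (z : ℝ) :
    Tendsto (fun c : ℝ => c ^ 2 * (z ^ 2 / (c ^ 2 + z ^ 2))) atTop (nhds (z ^ 2)) := by
  have hinf : Tendsto (fun c : ℝ => c ^ 2 + z ^ 2) atTop atTop :=
    tendsto_atTop_add_const_right _ _ (tendsto_pow_atTop two_ne_zero)
  have h : Tendsto (fun c : ℝ => z ^ 2 - z ^ 4 / (c ^ 2 + z ^ 2)) atTop (nhds (z ^ 2 - 0)) :=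
    tendsto_const_nhds.sub (hinf.const_div_atTop (z ^ 4))
  rw [sub_zero] at h
  refine h.congr' ?_
  filter_upwards [eventually_gt_atTop 0] with c hc
  have : 0 < c ^ 2 + z ^ 2 := by positivity
  field_simp
  ring

/-- If `D(c)` has density `d_c(x) = c (2π x (1−x)^3)^(−1/2) exp(−c² x/(2(1−x)))` on `(0,1)`,
then `c² D(c)` converges in distribution, as `c → ∞`, to `Z²` with `Z` standard Gaussian:
for every bounded continuous `f : ℝ → ℝ`,
`∫_0^1 f(c² x) d_c(x) dx → (2π)^(−1/2) ∫_ℝ f(z²) e^(−z²/2) dz`. -/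
theorem stmt4 (f : ℝ → ℝ) (hf : Continuous f) (hb : ∃ M, ∀ x, |f x| ≤ M) :
    Tendsto (fun c : ℝ =>
        ∫ x in Set.Ioo (0 : ℝ) 1,
          f (c ^ 2 * x) * (c / Real.sqrt (2 * Real.pi * x * (1 - x) ^ 3)
            * Real.exp (-(c ^ 2 * x) / (2 * (1 - x)))))
      atTop
      (nhds ((1 / Real.sqrt (2 * Real.pi)) * ∫ z : ℝ, f (z ^ 2) * Real.exp (-z ^ 2 / 2))) := by
  obtain ⟨M, hM⟩ := hb
  have hlim : Tendsto (fun c : ℝ =>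
      (1 / Real.sqrt (2 * Real.pi)) *
        ∫ z : ℝ, f (c ^ 2 * (z ^ 2 / (c ^ 2 + z ^ 2))) * Real.exp (-z ^ 2 / 2))
      atTop
      (nhds ((1 / Real.sqrt (2 * Real.pi)) * ∫ z : ℝ, f (z ^ 2) * Real.exp (-z ^ 2 / 2))) := by
    refine Tendsto.const_mul _ ?_
    refine tendsto_integral_filter_of_dominated_convergence
      (fun z => M * Real.exp (-z ^ 2 / 2)) ?_ ?_ ?_ ?_
    · refine Eventually.of_forall fun c => Measurable.aestronglyMeasurable ?_
      exact (hf.measurable.comp (by fun_prop)).mul (by fun_prop)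
    · refine Eventually.of_forall fun c => Eventually.of_forall fun z => ?_
      rw [Real.norm_eq_abs, abs_mul, Real.abs_exp]
      exact mul_le_mul_of_nonneg_right (hM _) (Real.exp_pos _).le
    · refine Integrable.const_mul ?_ M
      convert integrable_exp_neg_mul_sq (b := 1 / 2) (by norm_num) using 3
      ring
    · refine Eventually.of_forall fun z => Tendsto.mul_const _ ?_
      exact (hf.tendsto _).comp (tendsto_sq_mul_div_add_sq z)
  refine hlim.congr' ?_
  filter_upwards [eventually_gt_atTop 0] with c hc
  exact (integral_fireproof_eq f hc).symm
end

section
/- For every real q ≥ 0, the double integral ∫_0^∞ ∫_0^x (1 − e^{−qy}) (2π)^{−1} (y (x−y)^3)^{−1/2} exp(−x y/(2(x−y))) dy dx equals the single integral ∫_0^∞ (1 − e^{−qy}) e^{−y/2} (2π y^3)^{−1/2} dy. -/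
/-!
Write `x = y + u` with `u > 0`. Since `x y / (2 (x - y)) = y / 2 + y² / (2 u)`, the integrand of the
double integral factors as `jumpWeight q y * hittingKernel y (x - y)`, where
`hittingKernel y u = u ^ (-3/2) exp (-y² / (2 u))` for `u > 0`. The substitution `v = u ^ (-1/2)`
turns `∫ hittingKernel y u du` into a half-line Gaussian integral, equal to `√(2π) / y`
(`integral_hittingKernel`), so integrating in `x` first yields the right-hand side.

Interchanging the integrals requires integrability on the product. As the integrand is nonnegative,
this amounts to integrability of the resulting function of `y`, which follows from
`1 - exp (-q y) ≤ q y` and convergence of the Gamma integral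
`∫ y ^ (-1/2) exp (-y / 2) dy` (`integrable_marginal`).
-/

open MeasureTheory Set

/-- The unnormalised density of the first hitting time of level `y` by Brownian motion,
`u ↦ u ^ (-3/2) exp (-y² / (2 u))`, extended by `0` to `u ≤ 0`. -/
noncomputable def hittingKernel (y u : ℝ) : ℝ :=
  (Ioi (0 : ℝ)).indicator (fun u => u ^ (-(3 / 2) : ℝ) * Real.exp (-(y ^ 2 / 2) * u⁻¹)) u

/-- The factor of the integrand that depends on `y` only. -/
noncomputable def jumpWeight (q y : ℝ) : ℝ :=
  (1 - Real.exp (-(q * y))) * (1 / (2 * Real.pi)) * Real.exp (-y / 2) / Real.sqrt y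

lemma hittingKernel_nonneg (y u : ℝ) : 0 ≤ hittingKernel y u := by
  unfold hittingKernel
  apply indicator_nonneg
  intro u hu
  have : (0 : ℝ) < u := hu
  positivity

lemma jumpWeight_nonneg {q y : ℝ} (hq : 0 ≤ q) (hy : 0 < y) : 0 ≤ jumpWeight q y := by
  have h : Real.exp (-(q * y)) ≤ 1 := Real.exp_le_one_iff.2 (by nlinarith)
  have h' : 0 ≤ 1 - Real.exp (-(q * y)) := by linarith
  unfold jumpWeight
  positivity

lemma comp_rpow_eq (y : ℝ) {u : ℝ} (hu : 0 < u) :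
    (u ^ ((-(1 / 2) : ℝ) - 1)) • Real.exp (-(y ^ 2 / 2) * (u ^ (-(1 / 2) : ℝ)) ^ 2)
      = u ^ (-(3 / 2) : ℝ) * Real.exp (-(y ^ 2 / 2) * u⁻¹) := by
  rw [← Real.rpow_natCast (u ^ (-(1 / 2) : ℝ)) 2, ← Real.rpow_mul hu.le, ← Real.rpow_neg_one u,
    smul_eq_mul]
  norm_num

lemma integrable_hittingKernel {y : ℝ} (hy : 0 < y) : Integrable (hittingKernel y) := by
  unfold hittingKernel
  rw [integrable_indicator_iff measurableSet_Ioi]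
  have h := (integrableOn_Ioi_comp_rpow_iff' (fun v : ℝ => Real.exp (-(y ^ 2 / 2) * v ^ 2))
    (p := -(1 / 2)) (by norm_num)).2 (integrable_exp_neg_mul_sq (by positivity)).integrableOn
  exact h.congr_fun (fun u hu => comp_rpow_eq y hu) measurableSet_Ioi

lemma integral_hittingKernel {y : ℝ} (hy : 0 < y) :
    ∫ u, hittingKernel y u = Real.sqrt (2 * Real.pi) / y := by
  unfold hittingKernel
  rw [integral_indicator measurableSet_Ioi]
  have h := integral_comp_rpow_Ioi (fun v : ℝ => Real.exp (-(y ^ 2 / 2) * v ^ 2))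
    (p := -(1 / 2)) (by norm_num)
  rw [integral_gaussian_Ioi] at h
  have h2 : ∫ u in Ioi (0 : ℝ),
      (|(-(1 / 2) : ℝ)| * u ^ ((-(1 / 2) : ℝ) - 1)) •
        Real.exp (-(y ^ 2 / 2) * (u ^ (-(1 / 2) : ℝ)) ^ 2)
      = (1 / 2) * ∫ u in Ioi (0 : ℝ), u ^ (-(3 / 2) : ℝ) * Real.exp (-(y ^ 2 / 2) * u⁻¹) := by
    rw [← integral_const_mul]
    refine setIntegral_congr_fun measurableSet_Ioi fun u hu => ?_
    rw [← comp_rpow_eq y hu, abs_neg, abs_of_pos (by norm_num : (0 : ℝ) < 1 / 2)]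
    simp only [smul_eq_mul]
    ring
  rw [h2] at h
  have h3 : Real.sqrt (Real.pi / (y ^ 2 / 2)) = Real.sqrt (2 * Real.pi) / y := by
    rw [show Real.pi / (y ^ 2 / 2) = 2 * Real.pi / y ^ 2 by field_simp,
      Real.sqrt_div (by positivity), Real.sqrt_sq hy.le]
  rw [h3] at h
  linarith

lemma sqrt_cube {y : ℝ} (hy : 0 < y) : Real.sqrt (y ^ 3) = y * Real.sqrt y := by
  rw [show y ^ 3 = y ^ 2 * y by ring, Real.sqrt_mul (by positivity), Real.sqrt_sq hy.le]

lemma integrand_eq (q : ℝ) {x y : ℝ} (hy : 0 < y) (hyx : y < x) :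
    (1 - Real.exp (-(q * y))) * (1 / (2 * Real.pi))
      / Real.sqrt (y * (x - y) ^ 3) * Real.exp (-(x * y) / (2 * (x - y)))
      = jumpWeight q y * hittingKernel y (x - y) := by
  obtain ⟨u, hu, rfl⟩ : ∃ u, 0 < u ∧ x = y + u := ⟨x - y, by linarith, by ring⟩
  have e : Real.exp (-((y + u) * y) / (2 * u))
      = Real.exp (-y / 2) * Real.exp (-(y ^ 2 / 2) * u⁻¹) := by
    rw [← Real.exp_add]
    congr 1
    field_simp
    ring
  have r : u ^ (-(3 / 2) : ℝ) = (Real.sqrt (u ^ 3))⁻¹ := by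
    rw [Real.rpow_neg hu.le, Real.sqrt_eq_rpow, ← Real.rpow_natCast u 3, ← Real.rpow_mul hu.le]
    norm_num
  rw [add_sub_cancel_left, e, hittingKernel, indicator_of_mem (show u ∈ Ioi (0 : ℝ) from hu), r,
    Real.sqrt_mul hy.le, jumpWeight]
  have := Real.sqrt_pos.2 hy
  have := Real.sqrt_pos.2 (pow_pos hu 3)
  field_simp

lemma marginal_eq (q : ℝ) {y : ℝ} (hy : 0 < y) :
    jumpWeight q y * (Real.sqrt (2 * Real.pi) / y)
      = (1 - Real.exp (-(q * y))) * Real.exp (-y / 2) / Real.sqrt (2 * Real.pi * y ^ 3) := by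
  have hp : (0 : ℝ) < 2 * Real.pi := by positivity
  have h1 := Real.sqrt_pos.2 hy
  have h2 := Real.sqrt_pos.2 hp
  rw [Real.sqrt_mul hp.le, sqrt_cube hy, jumpWeight]
  nth_rewrite 1 [← Real.sq_sqrt hp.le]
  field_simp

lemma integrable_marginal {q : ℝ} (hq : 0 ≤ q) :
    IntegrableOn (fun y => jumpWeight q y * (Real.sqrt (2 * Real.pi) / y)) (Ioi 0) := by
  have hg : IntegrableOn (fun y : ℝ => y ^ (-(1 / 2) : ℝ) * Real.exp (-(1 / 2) * y)) (Ioi 0) := by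
    have := integrableOn_rpow_mul_exp_neg_mul_rpow (s := -(1 / 2)) (p := 1) (b := 1 / 2)
      (by norm_num) (by norm_num) (by norm_num)
    simpa using this
  refine (hg.const_mul (q * (1 / (2 * Real.pi)) * Real.sqrt (2 * Real.pi))).mono' ?_ ?_
  · refine Measurable.aestronglyMeasurable ?_
    unfold jumpWeight
    fun_prop
  · filter_upwards [ae_restrict_mem measurableSet_Ioi] with y hy
    have hy : 0 < y := hy
    have hw := jumpWeight_nonneg hq hy
    rw [Real.norm_of_nonneg (by positivity), Real.rpow_neg hy.le, ← Real.sqrt_eq_rpow, jumpWeight,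
      show -(1 / 2) * y = -y / 2 by ring]
    have hb : (1 - Real.exp (-(q * y))) / y ≤ q := by
      rw [div_le_iff₀ hy]
      linarith [Real.add_one_le_exp (-(q * y))]
    calc _ = (1 - Real.exp (-(q * y))) / y * (1 / (2 * Real.pi) * Real.sqrt (2 * Real.pi)
            * ((Real.sqrt y)⁻¹ * Real.exp (-y / 2))) := by ring
      _ ≤ q * (1 / (2 * Real.pi) * Real.sqrt (2 * Real.pi)
            * ((Real.sqrt y)⁻¹ * Real.exp (-y / 2))) := by gcongr
      _ = _ := by ring

/-- Joint integrability of the integrand, by Tonelli. -/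
lemma integrable_joint {q : ℝ} (hq : 0 ≤ q) :
    Integrable (Function.uncurry fun x y => jumpWeight q y * hittingKernel y (x - y))
      ((volume : Measure ℝ).prod (volume.restrict (Ioi (0 : ℝ)))) := by
  have hm : Measurable (Function.uncurry fun x y => jumpWeight q y * hittingKernel y (x - y)) := by
    have hk : Measurable fun z : ℝ × ℝ => hittingKernel z.2 (z.1 - z.2) := by
      have hs : MeasurableSet {z : ℝ × ℝ | 0 < z.1 - z.2} :=
        measurableSet_lt measurable_const (by fun_prop)
      exact Measurable.indicator (s := {z : ℝ × ℝ | 0 < z.1 - z.2})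
        (f := fun z : ℝ × ℝ => (z.1 - z.2) ^ (-(3 / 2) : ℝ)
          * Real.exp (-(z.2 ^ 2 / 2) * (z.1 - z.2)⁻¹)) (by fun_prop) hs
    have hj : Measurable (jumpWeight q) := by
      unfold jumpWeight
      fun_prop
    exact (hj.comp measurable_snd).mul hk
  rw [integrable_prod_iff' hm.aestronglyMeasurable]
  constructor
  · filter_upwards [ae_restrict_mem measurableSet_Ioi] with y hy
    simp only [Function.uncurry_apply_pair]
    exact ((integrable_hittingKernel hy).comp_sub_right y).const_mul _
  · refine (integrable_marginal hq).congr ?_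
    filter_upwards [ae_restrict_mem measurableSet_Ioi] with y hy
    have hn : ∀ x, ‖Function.uncurry (fun x y => jumpWeight q y * hittingKernel y (x - y)) (x, y)‖
        = jumpWeight q y * hittingKernel y (x - y) := fun x =>
      Real.norm_of_nonneg (mul_nonneg (jumpWeight_nonneg hq hy) (hittingKernel_nonneg _ _))
    simp_rw [hn]
    rw [integral_const_mul, integral_sub_right_eq_self (hittingKernel y) y,
      integral_hittingKernel hy]

/-- Change of variables `(x, y) ↦ (y (x−y)^(−1/2), y)`: for every `q ≥ 0`,
`∫_0^∞ ∫_0^x (1 − e^(−qy)) (2π)^(−1) (y (x−y)³)^(−1/2) exp(−xy/(2(x−y))) dy dx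
  = ∫_0^∞ (1 − e^(−qy)) e^(−y/2) (2π y³)^(−1/2) dy`. -/
theorem stmt10 (q : ℝ) (hq : 0 ≤ q) :
    ∫ x in Set.Ioi (0 : ℝ), ∫ y in Set.Ioo (0 : ℝ) x,
        (1 - Real.exp (-(q * y))) * (1 / (2 * Real.pi))
          / Real.sqrt (y * (x - y) ^ 3) * Real.exp (-(x * y) / (2 * (x - y)))
      = ∫ y in Set.Ioi (0 : ℝ),
          (1 - Real.exp (-(q * y))) * Real.exp (-y / 2) / Real.sqrt (2 * Real.pi * y ^ 3) := by
  have hzero : ∀ x y : ℝ, x ≤ y → jumpWeight q y * hittingKernel y (x - y) = 0 := by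
    intro x y hxy
    have : x - y ∉ Ioi (0 : ℝ) := by simpa using hxy
    rw [hittingKernel, indicator_of_notMem this, mul_zero]
  have hinner : ∀ x : ℝ, ∫ y in Set.Ioo (0 : ℝ) x,
        (1 - Real.exp (-(q * y))) * (1 / (2 * Real.pi))
          / Real.sqrt (y * (x - y) ^ 3) * Real.exp (-(x * y) / (2 * (x - y)))
      = ∫ y in Ioi (0 : ℝ), jumpWeight q y * hittingKernel y (x - y) := by
    intro x
    rw [setIntegral_eq_of_subset_of_forall_sdiff_eq_zero measurableSet_Ioi
      (show Ioo (0 : ℝ) x ⊆ Ioi 0 from Ioo_subset_Ioi_self)]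
    · exact setIntegral_congr_fun measurableSet_Ioo fun y hy => integrand_eq q hy.1 hy.2
    · rintro y ⟨hy, hyx⟩
      exact hzero x y (not_lt.1 fun h => hyx ⟨hy, h⟩)
  simp_rw [hinner]
  -- For `x ≤ 0` the inner integrand vanishes, so `x` may range over the whole line.
  rw [setIntegral_eq_integral_of_forall_compl_eq_zero, integral_integral_swap (integrable_joint hq)]
  · refine setIntegral_congr_fun measurableSet_Ioi fun y hy => ?_
    rw [integral_const_mul, integral_sub_right_eq_self (hittingKernel y) y,
      integral_hittingKernel hy, marginal_eq q hy]
  · intro x hx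
    refine setIntegral_eq_zero_of_forall_eq_zero fun y hy => hzero x y ?_
    exact (not_lt.1 hx).trans (le_of_lt hy)
end

section
/- Let f and f_1, f_2, … be functions from [0,1] to [0,∞) that are non-decreasing, right-continuous and vanish at 0, and suppose f_n converges to f in the Skorohod sense. Then for every integer N ≥ 1, the vector (j_1^{(n)}, …, j_N^{(n)}) of the N largest ranked jumps of f_n converges in ℝ^N to the vector (j_1, …, j_N) of the N largest ranked jumps of f as n → ∞. -/
/-!
Monotone functions on `[0,1]` have left limits on `(0,1]`, and a time change `φ` which is a strictly
increasing continuous bijection of `[0,1]` carries left neighbourhoods to left neighbourhoods. Hence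
`|g ∘ φ - f| ≤ ε` on `[0,1]` gives `|Δg(φ t) - Δf(t)| ≤ 2ε` on `(0,1]` (`abs_jumpAt_sub_le`), so
`φ` matches the jumps of `f` with those of `g` up to `2ε`. Ranking does not increase this error
(`IsRankedJumpSeq.sub_le`, a pigeonhole argument), so each ranked jump of `fₙ` is eventually
within `2ε` of the corresponding one of `f`.
-/

open Filter Set

/-- The jump of `g` at `t`: `Δg(t) = g(t) − g(t⁻)`. -/
noncomputable def jumpAt (g : ℝ → ℝ) (t : ℝ) : ℝ := g t - Function.leftLim g t

/-- `j` is the ranked jump sequence of `g` (viewed on `[0,1]`): it is non-increasing,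
nonnegative, and enumerates in non-increasing order, with multiplicity, the positive
jumps of `g` on `(0,1]`, padded with zeros. -/
def IsRankedJumpSeq (g : ℝ → ℝ) (j : ℕ → ℝ) : Prop :=
  Antitone j ∧ (∀ k, 0 ≤ j k) ∧
  ∃ e : ℕ → ℝ,
    Set.InjOn e {k | j k ≠ 0} ∧
    (∀ k, j k ≠ 0 → e k ∈ Set.Ioc (0 : ℝ) 1 ∧ jumpAt g (e k) = j k) ∧
    (∀ t ∈ Set.Ioc (0 : ℝ) 1, 0 < jumpAt g t → ∃ k, j k ≠ 0 ∧ e k = t)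

/-- `fn` converges to `f` in the Skorohod sense on `[0,1]`: there are increasing
homeomorphisms `λₙ` of `[0,1]` with `λₙ → id` and `fn ∘ λₙ → f`, both uniformly on `[0,1]`. -/
def SkorohodTendsto (fn : ℕ → ℝ → ℝ) (f : ℝ → ℝ) : Prop :=
  ∃ lam : ℕ → ℝ → ℝ,
    (∀ n, lam n 0 = 0 ∧ lam n 1 = 1 ∧ StrictMonoOn (lam n) (Set.Icc 0 1) ∧
      ContinuousOn (lam n) (Set.Icc 0 1) ∧
      Set.MapsTo (lam n) (Set.Icc 0 1) (Set.Icc 0 1)) ∧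
    TendstoUniformlyOn (fun n t => lam n t) id atTop (Set.Icc 0 1) ∧
    TendstoUniformlyOn (fun n t => fn n (lam n t)) f atTop (Set.Icc 0 1)

lemma tendsto_leftLim_of_monotoneOn_Icc {g : ℝ → ℝ} (hg : MonotoneOn g (Icc 0 1)) {t : ℝ}
    (ht : t ∈ Ioc (0 : ℝ) 1) : Tendsto g (nhdsWithin t (Iio t)) (nhds (Function.leftLim g t)) := by
  have hsub : Ioo 0 t ⊆ Icc (0 : ℝ) 1 := fun x hx => ⟨hx.1.le, hx.2.le.trans ht.2⟩
  have hbdd : BddAbove (g '' Ioo 0 t) := by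
    refine ⟨g t, ?_⟩
    rintro _ ⟨x, hx, rfl⟩
    exact hg (hsub hx) ⟨ht.1.le, ht.2⟩ hx.2.le
  have h := (hg.mono hsub).tendsto_nhdsWithin_Ioo_left (nonempty_Ioo.2 ht.1) hbdd
  exact tendsto_leftLim_of_tendsto ⟨_, h⟩

/-- Functions that are uniformly `ε`-close after a time change have `2ε`-close jumps at
corresponding times. -/
lemma abs_jumpAt_sub_le {f g φ : ℝ → ℝ} (hf : MonotoneOn f (Icc 0 1))
    (hg : MonotoneOn g (Icc 0 1)) (hφ : StrictMonoOn φ (Icc 0 1))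
    (hφc : ContinuousOn φ (Icc 0 1)) (hφm : MapsTo φ (Ioc 0 1) (Ioc 0 1)) {ε : ℝ}
    (h : ∀ t ∈ Icc (0 : ℝ) 1, |g (φ t) - f t| ≤ ε) {t : ℝ} (ht : t ∈ Ioc (0 : ℝ) 1) :
    |jumpAt g (φ t) - jumpAt f t| ≤ 2 * ε := by
  have ht' : t ∈ Icc (0 : ℝ) 1 := ⟨ht.1.le, ht.2⟩
  have hnear : ∀ᶠ x in nhdsWithin t (Iio t), x ∈ Ico 0 t := Ico_mem_nhdsLT ht.1
  have hsub : Ico 0 t ⊆ Icc (0 : ℝ) 1 := fun x hx => ⟨hx.1, hx.2.le.trans ht.2⟩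
  have hφt : Tendsto φ (nhdsWithin t (Iio t)) (nhdsWithin (φ t) (Iio (φ t))) := by
    refine tendsto_nhdsWithin_iff.2 ⟨?_, ?_⟩
    · have := ((hφc t ht').mono hsub).tendsto
      rwa [nhdsWithin_Ico_eq_nhdsLT ht.1] at this
    · filter_upwards [hnear] with x hx using hφ (hsub hx) ht' hx.2
  have hlim := (((tendsto_leftLim_of_monotoneOn_Icc hg (hφm ht)).comp hφt).sub
    (tendsto_leftLim_of_monotoneOn_Icc hf ht)).abs
  have h1 : |Function.leftLim g (φ t) - Function.leftLim f t| ≤ ε :=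
    le_of_tendsto hlim (by filter_upwards [hnear] with x hx using h x (hsub hx))
  have h2 := h t ht'
  unfold jumpAt
  rw [abs_le] at *
  constructor <;> linarith [h1.1, h1.2, h2.1, h2.2]

/-- If the times of `g` inject into those of `h` so that jumps decrease by at most `δ`, then every
ranked jump decreases by at most `δ`: otherwise `k + 1` distinct jumps of `h` would exceed its
ranked jump of index `k`, which is preceded by only `k` others. -/
lemma IsRankedJumpSeq.sub_le {g h : ℝ → ℝ} {a b : ℕ → ℝ} (ha : IsRankedJumpSeq g a)
    (hb : IsRankedJumpSeq h b) {φ : ℝ → ℝ} (hφm : MapsTo φ (Ioc 0 1) (Ioc 0 1))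
    (hφi : InjOn φ (Ioc 0 1)) {δ : ℝ} (hδ : 0 ≤ δ)
    (hgh : ∀ t ∈ Ioc (0 : ℝ) 1, jumpAt g t - δ ≤ jumpAt h (φ t)) (k : ℕ) : a k - δ ≤ b k := by
  obtain ⟨ha_anti, -, e, he_inj, he, -⟩ := ha
  obtain ⟨hb_anti, hb_nonneg, e', -, he', hsurj⟩ := hb
  by_contra! hlt
  have hbk := hb_nonneg k
  have hne : ∀ i ≤ k, a i ≠ 0 := fun i hi => by
    have := ha_anti hi
    exact ne_of_gt (by linarith)
  have hm : ∀ i ≤ k, ∃ m, m < k ∧ e' m = φ (e i) := by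
    intro i hi
    obtain ⟨hmem, hji⟩ := he i (hne i hi)
    have hle := hgh _ hmem
    have hai := ha_anti hi
    have hbig : b k < jumpAt h (φ (e i)) := by linarith
    obtain ⟨m, hm0, hme⟩ := hsurj _ (hφm hmem) (hbk.trans_lt hbig)
    refine ⟨m, ?_, hme⟩
    by_contra! hkm
    have hmk := hb_anti hkm
    have hbm := (he' m hm0).2
    rw [hme] at hbm
    linarith
  choose! m hmk hme using hm
  obtain ⟨x, hx, y, hy, hxy, heq⟩ := Finset.exists_ne_map_eq_of_card_lt_of_maps_to
    (s := Finset.range (k + 1)) (t := Finset.range k) (f := m) (by simp)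
    (fun i hi => Finset.mem_coe.2 (Finset.mem_range.2
      (hmk i (Nat.lt_succ_iff.1 (Finset.mem_range.1 hi)))))
  have hx' : x ≤ k := Nat.lt_succ_iff.1 (Finset.mem_range.1 hx)
  have hy' : y ≤ k := Nat.lt_succ_iff.1 (Finset.mem_range.1 hy)
  refine hxy (he_inj (hne x hx') (hne y hy') (hφi (he x (hne x hx')).1 (he y (hne y hy')).1 ?_))
  rw [← hme x hx', ← hme y hy', heq]

/-- If `fn → f` in the Skorohod sense, with all functions non-decreasing, right-continuous,
nonnegative and vanishing at `0` on `[0,1]`, then for every `N ≥ 1` the vector of the `N`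
largest ranked jumps of `fn` converges in `ℝ^N` to that of `f`. -/
theorem stmt12
    (f : ℝ → ℝ) (fn : ℕ → ℝ → ℝ)
    (hf_mono : MonotoneOn f (Set.Icc 0 1))
    (hf_rc : ∀ t ∈ Set.Ico (0 : ℝ) 1, ContinuousWithinAt f (Set.Ici t) t)
    (hf0 : f 0 = 0) (hf_nonneg : ∀ t ∈ Set.Icc (0 : ℝ) 1, 0 ≤ f t)
    (hfn_mono : ∀ n, MonotoneOn (fn n) (Set.Icc 0 1))
    (hfn_rc : ∀ n, ∀ t ∈ Set.Ico (0 : ℝ) 1, ContinuousWithinAt (fn n) (Set.Ici t) t)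
    (hfn0 : ∀ n, fn n 0 = 0) (hfn_nonneg : ∀ n, ∀ t ∈ Set.Icc (0 : ℝ) 1, 0 ≤ fn n t)
    (hsk : SkorohodTendsto fn f)
    (j : ℕ → ℝ) (hj : IsRankedJumpSeq f j)
    (jn : ℕ → ℕ → ℝ) (hjn : ∀ n, IsRankedJumpSeq (fn n) (jn n))
    (N : ℕ) (hN : 1 ≤ N) :
    Tendsto (fun n => fun i : Fin N => jn n i) atTop (nhds (fun i : Fin N => j i)) := by
  obtain ⟨lam, hlam, -, hconv⟩ := hsk
  refine tendsto_pi_nhds.2 fun i => ?_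
  rw [Metric.tendsto_atTop]
  intro ε hε
  rw [Metric.tendstoUniformlyOn_iff] at hconv
  obtain ⟨n₀, hn₀⟩ := eventually_atTop.1 (hconv (ε / 4) (by positivity))
  refine ⟨n₀, fun n hn => ?_⟩
  obtain ⟨h0, h1, hmono, hcont, hmaps⟩ := hlam n
  have hIoc : Ioc (0 : ℝ) 1 ⊆ Icc 0 1 := Ioc_subset_Icc_self
  have hbij : BijOn (lam n) (Ioc 0 1) (Ioc 0 1) := by
    refine ⟨fun t ht => ⟨?_, (hmaps (hIoc ht)).2⟩, hmono.injOn.mono hIoc, ?_⟩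
    · have := hmono ⟨le_rfl, zero_le_one⟩ (hIoc ht) ht.1
      rwa [h0] at this
    · have := intermediate_value_Ioc (zero_le_one' ℝ) hcont
      rwa [h0, h1] at this
  have hjump : ∀ t ∈ Ioc (0 : ℝ) 1, |jumpAt (fn n) (lam n t) - jumpAt f t| ≤ 2 * (ε / 4) := by
    intro t ht
    refine abs_jumpAt_sub_le hf_mono (hfn_mono n) hmono hcont hbij.mapsTo (fun s hs => ?_) ht
    have := hn₀ n hn s hs
    rw [dist_comm, Real.dist_eq] at this
    exact this.le
  have hle := hj.sub_le (hjn n) hbij.mapsTo hbij.injOn (δ := 2 * (ε / 4)) (by positivity)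
    (fun t ht => by linarith [(abs_le.1 (hjump t ht)).1]) i
  -- The reverse bound uses the inverse time change.
  have hinv := hbij.invOn_invFunOn
  have hbij' := hbij.symm hinv.symm
  have hge := (hjn n).sub_le hj hbij'.mapsTo hbij'.injOn (δ := 2 * (ε / 4)) (by positivity)
    (fun t ht => by
      have := (abs_le.1 (hjump _ (hbij'.mapsTo ht))).2
      rw [hinv.2 ht] at this
      linarith) i
  rw [Real.dist_eq, abs_lt]
  constructor <;> linarith
end

section
/- Let f and f_1, f_2, … be functions from [0,1] to [0,∞) that are non-decreasing, right-continuous and vanish at 0, and suppose f_n converges to f in the Skorohod sense. If moreover f is a pure jump function, in the sense that f(1) equals the sum ∑_{k≥1} j_k of all its jump sizes, then the ranked jump sequences converge in ℓ^1: ∑_{k≥1} |j_k^{(n)} − j_k| → 0 as n → ∞. -/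
/-!
The proof is a Scheffé argument. The jumps of a non-decreasing function add up to at most its
total increment, so `∑ₖ jₖ⁽ⁿ⁾ ≤ fₙ(1)` (`IsRankedJumpSeq.summable_and_tsum_le`), and
`fₙ(1) → f(1) = ∑ₖ jₖ` because every time change fixes `1`. Since `|a - b| = a - b + 2 (b - a)⁺`,
`∑ₖ |jₖ⁽ⁿ⁾ - jₖ| ≤ fₙ(1) - f(1) + 2 ∑ₖ (jₖ - jₖ⁽ⁿ⁾)⁺`.
The last sum is dominated by `∑ₖ jₖ`, so it tends to `0` as soon as
`lim infₙ jₖ⁽ⁿ⁾ ≥ jₖ` for each `k`.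
This lower bound holds because the `k + 1` largest jumps of `f`, moved by the time change, are
jumps of `fₙ` whose sizes have dropped by at most twice the uniform distance between `fₙ ∘ λₙ` and
`f` (`jumpAt_le_of_timeChange`), so `fₙ` has at least `k + 1` jumps of size about `jₖ` or more
(`IsRankedJumpSeq.le_of_jumps`).
-/

open Filter Set

/-- On `(0,1]` the left limit of a function that is non-decreasing on `[0,1]` is a genuine limit,
not the junk value of `Function.leftLim`. -/
lemma tendsto_leftLim_of_monotoneOn {g : ℝ → ℝ} (hg : MonotoneOn g (Set.Icc 0 1)) {t : ℝ}
    (ht : t ∈ Set.Ioc (0 : ℝ) 1) :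
    Tendsto g (nhdsWithin t (Set.Iio t)) (nhds (Function.leftLim g t)) := by
  -- Extend `g` from `[0,1]` to a monotone function on the whole line.
  set G : ℝ → ℝ := Set.IccExtend zero_le_one ((Set.Icc (0 : ℝ) 1).domRestrict g) with hG
  have hGm : Monotone G := by
    apply Monotone.IccExtend
    intro x y hxy
    exact hg x.2 y.2 hxy
  have h1 := hGm.tendsto_leftLim t
  have h2 : G =ᶠ[nhdsWithin t (Set.Iio t)] g := by
    filter_upwards [Ioo_mem_nhdsLT ht.1] with x hx
    rw [hG, Set.IccExtend_of_mem _ _ ⟨hx.1.le, hx.2.le.trans ht.2⟩]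
    rfl
  have h3 := h1.congr' h2
  rwa [leftLim_eq_of_tendsto h3]

lemma le_leftLim_of_monotoneOn {g : ℝ → ℝ} (hg : MonotoneOn g (Set.Icc 0 1)) {s t : ℝ}
    (hs : 0 ≤ s) (hst : s < t) (ht : t ≤ 1) : g s ≤ Function.leftLim g t := by
  refine ge_of_tendsto (tendsto_leftLim_of_monotoneOn hg ⟨hs.trans_lt hst, ht⟩) ?_
  filter_upwards [Ioo_mem_nhdsLT hst] with x hx
  exact hg ⟨hs, hst.le.trans ht⟩ ⟨hs.trans hx.1.le, hx.2.le.trans ht⟩ hx.1.le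

lemma leftLim_le_of_forall_lt {g : ℝ → ℝ} (hg : MonotoneOn g (Set.Icc 0 1)) {t C : ℝ}
    (ht : t ∈ Set.Ioc (0 : ℝ) 1) (h : ∀ s, 0 ≤ s → s < t → g s ≤ C) :
    Function.leftLim g t ≤ C := by
  refine le_of_tendsto (tendsto_leftLim_of_monotoneOn hg ht) ?_
  filter_upwards [Ioo_mem_nhdsLT ht.1] with x hx
  exact h x hx.1.le hx.2

/-- The jumps of a non-decreasing function at finitely many points of `(0,a]` add up to at most
its increment over `[0,a]`. -/
lemma sum_jumpAt_le {g : ℝ → ℝ} (hg : MonotoneOn g (Set.Icc 0 1)) (S : Finset ℝ) :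
    ∀ a : ℝ, 0 ≤ a → a ≤ 1 → (∀ t ∈ S, t ∈ Set.Ioc (0 : ℝ) a) →
      ∑ t ∈ S, jumpAt g t ≤ g a - g 0 := by
  induction S using Finset.induction_on_max with
  | empty =>
    intro a ha0 ha1 _
    simpa using hg ⟨le_rfl, zero_le_one⟩ ⟨ha0, ha1⟩ ha0
  | insert m S hm ih =>
    intro a ha0 ha1 hS
    have hmS : m ∈ Set.Ioc (0 : ℝ) a := hS m (Finset.mem_insert_self _ _)
    -- A point `b < m` beyond the other jumps, so that these are bounded by `g b - g 0`.
    obtain ⟨b, hb0, hbm, hbS⟩ : ∃ b, 0 ≤ b ∧ b < m ∧ ∀ t ∈ S, t ≤ b := by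
      refine ⟨(insert 0 S).max' (Finset.insert_nonempty _ _),
        Finset.le_max' _ _ (Finset.mem_insert_self _ _), ?_,
        fun t ht => Finset.le_max' _ _ (Finset.mem_insert_of_mem ht)⟩
      rw [Finset.max'_lt_iff]
      intro y hy
      rcases Finset.mem_insert.1 hy with rfl | hy
      · exact hmS.1
      · exact hm y hy
    have h1 := ih b hb0 (hbm.le.trans (hmS.2.trans ha1))
      (fun t ht => ⟨(hS t (Finset.mem_insert_of_mem ht)).1, hbS t ht⟩)
    have h2 := le_leftLim_of_monotoneOn hg hb0 hbm (hmS.2.trans ha1)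
    have h3 := hg ⟨hmS.1.le, hmS.2.trans ha1⟩ ⟨ha0, ha1⟩ hmS.2
    rw [Finset.sum_insert (fun h => lt_irrefl _ (hm m h))]
    unfold jumpAt at h1 ⊢
    linarith

lemma IsRankedJumpSeq.summable_and_tsum_le {g : ℝ → ℝ} (hg : MonotoneOn g (Set.Icc 0 1))
    (hg0 : g 0 = 0) {j : ℕ → ℝ} (hj : IsRankedJumpSeq g j) :
    Summable j ∧ ∑' k, j k ≤ g 1 := by
  obtain ⟨-, hnn, e, he, hej, -⟩ := hj
  have key : ∀ u : Finset ℕ, ∑ k ∈ u, j k ≤ g 1 := by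
    intro u
    have hinj : Set.InjOn e (u.filter (fun k => j k ≠ 0) : Finset ℕ) := by
      intro x hx y hy hxy
      exact he (Finset.mem_filter.1 hx).2 (Finset.mem_filter.1 hy).2 hxy
    have h := sum_jumpAt_le hg ((u.filter (fun k => j k ≠ 0)).image e) 1 zero_le_one le_rfl
      (by
        intro t ht
        obtain ⟨k, hk, rfl⟩ := Finset.mem_image.1 ht
        exact (hej k (Finset.mem_filter.1 hk).2).1)
    rw [Finset.sum_image hinj, hg0, sub_zero] at h
    rw [← Finset.sum_filter_ne_zero]
    refine le_trans (le_of_eq (Finset.sum_congr rfl fun k hk => ?_)) h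
    exact (hej k (Finset.mem_filter.1 hk).2).2.symm
  have hs : Summable j := summable_of_sum_le hnn key
  exact ⟨hs, hs.tsum_le_of_sum_le key⟩

/-- A function with at least `k + 1` jumps of size `≥ c > 0` has `k`-th ranked jump (counting
from `0`) at least `c`. -/
lemma IsRankedJumpSeq.le_of_jumps {g : ℝ → ℝ} {j : ℕ → ℝ} (hj : IsRankedJumpSeq g j) {c : ℝ}
    (hc : 0 < c) (k : ℕ) (p : ℕ → ℝ) (hp : Set.InjOn p (Set.Iic k))
    (hpm : ∀ i ≤ k, p i ∈ Set.Ioc (0 : ℝ) 1) (hpj : ∀ i ≤ k, c ≤ jumpAt g (p i)) :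
    c ≤ j k := by
  obtain ⟨hanti, -, e, -, hej, hsurj⟩ := hj
  have h : ∀ i, ∃ m, i ≤ k → j m ≠ 0 ∧ e m = p i := by
    intro i
    by_cases hi : i ≤ k
    · obtain ⟨m, hm⟩ := hsurj (p i) (hpm i hi) (hc.trans_le (hpj i hi))
      exact ⟨m, fun _ => hm⟩
    · exact ⟨0, fun h => absurd h hi⟩
  choose m hm using h
  -- The `k + 1` distinct ranks `m i` cannot all be smaller than `k`.
  obtain ⟨i, hi, hki⟩ : ∃ i ≤ k, k ≤ m i := by
    by_contra! hlt
    obtain ⟨x, hx, y, hy, hxy, hmxy⟩ := Finset.exists_ne_map_eq_of_card_lt_of_maps_to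
      (s := Finset.range (k + 1)) (t := Finset.range k) (f := m) (by simp)
      (fun i hi => by
        simpa using hlt i (Nat.lt_succ_iff.1 (by simpa using hi)))
    have hx' : x ≤ k := Nat.lt_succ_iff.1 (Finset.mem_range.1 hx)
    have hy' : y ≤ k := Nat.lt_succ_iff.1 (Finset.mem_range.1 hy)
    exact hxy (hp hx' hy' (by rw [← (hm x hx').2, ← (hm y hy').2, hmxy]))
  calc c ≤ jumpAt g (p i) := hpj i hi
    _ = j (m i) := by rw [← (hm i hi).2, (hej _ (hm i hi).1).2]
    _ ≤ j k := hanti hki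

/-- If `g ∘ l` is within `δ` of `f` on `[0,1]`, then the jump of `g` at `l t` is at most `2δ`
smaller than the jump of `f` at `t`. -/
lemma jumpAt_le_of_timeChange {f g l : ℝ → ℝ} {δ : ℝ} (hf : MonotoneOn f (Set.Icc 0 1))
    (hg : MonotoneOn g (Set.Icc 0 1)) (hl0 : l 0 = 0) (hl1 : l 1 = 1)
    (hlm : StrictMonoOn l (Set.Icc 0 1)) (hlc : ContinuousOn l (Set.Icc 0 1))
    (hδ : ∀ t ∈ Set.Icc (0 : ℝ) 1, |f t - g (l t)| ≤ δ) {t : ℝ} (ht : t ∈ Set.Ioc (0 : ℝ) 1) :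
    l t ∈ Set.Ioc (0 : ℝ) 1 ∧ jumpAt f t - 2 * δ ≤ jumpAt g (l t) := by
  have ht' : t ∈ Set.Icc (0 : ℝ) 1 := ⟨ht.1.le, ht.2⟩
  have hlt : l t ∈ Set.Ioc (0 : ℝ) 1 := by
    constructor
    · rw [← hl0]
      exact hlm ⟨le_rfl, zero_le_one⟩ ht' ht.1
    · rw [← hl1]
      exact hlm.monotoneOn ht' ⟨zero_le_one, le_rfl⟩ ht.2
  refine ⟨hlt, ?_⟩
  have h1 : Function.leftLim g (l t) ≤ Function.leftLim f t + δ := by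
    refine leftLim_le_of_forall_lt hg hlt fun s hs0 hst => ?_
    obtain ⟨r, hr, rfl⟩ : s ∈ l '' Set.Icc 0 1 := by
      apply intermediate_value_Icc zero_le_one hlc
      rw [hl0, hl1]
      exact ⟨hs0, hst.le.trans hlt.2⟩
    have hrt : r < t := (hlm.lt_iff_lt hr ht').1 hst
    have h2 := le_leftLim_of_monotoneOn hf hr.1 hrt ht.2
    have h3 := (abs_le.1 (hδ r hr)).1
    linarith
  have h4 := (abs_le.1 (hδ t ht')).2
  unfold jumpAt
  linarith

/-- The lower half of the convergence of ranked jumps: `lim infₙ jₖ⁽ⁿ⁾ ≥ jₖ`. -/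
lemma eventually_sub_le_rankedJump {f : ℝ → ℝ} {fn : ℕ → ℝ → ℝ}
    (hf : MonotoneOn f (Set.Icc 0 1)) (hfn : ∀ n, MonotoneOn (fn n) (Set.Icc 0 1))
    (hsk : SkorohodTendsto fn f) {j : ℕ → ℝ} (hj : IsRankedJumpSeq f j)
    {jn : ℕ → ℕ → ℝ} (hjn : ∀ n, IsRankedJumpSeq (fn n) (jn n)) (k : ℕ) {ε : ℝ} (hε : 0 < ε) :
    ∀ᶠ n in atTop, j k - ε ≤ jn n k := by
  obtain ⟨lam, hlam, -, hunif⟩ := hsk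
  obtain ⟨hanti, -, e, he, hej, -⟩ := hj
  rcases le_or_gt (j k - ε) 0 with hle | hpos
  · exact Eventually.of_forall fun n => hle.trans ((hjn n).2.1 k)
  have hge : ∀ i ≤ k, j k ≤ j i := fun i hi => hanti hi
  have hne : ∀ i ≤ k, j i ≠ 0 := fun i hi => by
    have := hge i hi
    exact (show 0 < j i by linarith).ne'
  filter_upwards [Metric.tendstoUniformlyOn_iff.1 hunif (ε / 2) (half_pos hε)] with n hn
  obtain ⟨hl0, hl1, hlm, hlc, -⟩ := hlam n
  have hjump := fun i (hi : i ≤ k) => jumpAt_le_of_timeChange hf (hfn n) hl0 hl1 hlm hlc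
    (δ := ε / 2) (fun t ht => by simpa [Real.dist_eq] using (hn t ht).le) (hej i (hne i hi)).1
  refine (hjn n).le_of_jumps hpos k (fun i => lam n (e i)) ?_ (fun i hi => (hjump i hi).1) ?_
  · intro x hx y hy hxy
    have hx' := (hej x (hne x hx)).1
    have hy' := (hej y (hne y hy)).1
    exact he (hne x hx) (hne y hy)
      (hlm.injOn ⟨hx'.1.le, hx'.2⟩ ⟨hy'.1.le, hy'.2⟩ hxy)
  · intro i hi
    have h1 := (hjump i hi).2
    rw [(hej i (hne i hi)).2] at h1
    have h2 := hge i hi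
    linarith

/-- If `fn → f` in the Skorohod sense, with all functions non-decreasing, right-continuous,
nonnegative and vanishing at `0` on `[0,1]`, and if moreover `f` is a pure jump function
(`f(1) = ∑_k j_k`), then the ranked jump sequences converge in `ℓ¹`:
`∑_k |j_k⁽ⁿ⁾ − j_k| → 0`. -/
theorem stmt13
    (f : ℝ → ℝ) (fn : ℕ → ℝ → ℝ)
    (hf_mono : MonotoneOn f (Set.Icc 0 1))
    (hf_rc : ∀ t ∈ Set.Ico (0 : ℝ) 1, ContinuousWithinAt f (Set.Ici t) t)
    (hf0 : f 0 = 0) (hf_nonneg : ∀ t ∈ Set.Icc (0 : ℝ) 1, 0 ≤ f t)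
    (hfn_mono : ∀ n, MonotoneOn (fn n) (Set.Icc 0 1))
    (hfn_rc : ∀ n, ∀ t ∈ Set.Ico (0 : ℝ) 1, ContinuousWithinAt (fn n) (Set.Ici t) t)
    (hfn0 : ∀ n, fn n 0 = 0) (hfn_nonneg : ∀ n, ∀ t ∈ Set.Icc (0 : ℝ) 1, 0 ≤ fn n t)
    (hsk : SkorohodTendsto fn f)
    (j : ℕ → ℝ) (hj : IsRankedJumpSeq f j)
    (jn : ℕ → ℕ → ℝ) (hjn : ∀ n, IsRankedJumpSeq (fn n) (jn n))
    (hpure : f 1 = ∑' k, j k) :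
    Tendsto (fun n => ∑' k, |jn n k - j k|) atTop (nhds 0) := by
  obtain ⟨hjs, -⟩ := hj.summable_and_tsum_le hf_mono hf0
  have hjns := fun n => (hjn n).summable_and_tsum_le (hfn_mono n) (hfn0 n)
  have hone : Tendsto (fun n => fn n 1) atTop (nhds (f 1)) := by
    obtain ⟨lam, hlam, -, hunif⟩ := hsk
    have h := hunif.tendsto_at (x := 1) ⟨zero_le_one, le_rfl⟩
    exact h.congr fun n => by rw [(hlam n).2.1]
  have hdefect : Tendsto (fun n => ∑' k, max (j k - jn n k) 0) atTop (nhds 0) := by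
    have hdom := tendsto_tsum_of_dominated_convergence (𝓕 := atTop)
      (f := fun n k => max (j k - jn n k) 0) (g := fun _ => (0 : ℝ)) (bound := j) hjs
      (fun k => by
        rw [Metric.tendsto_nhds]
        intro ε hε
        filter_upwards [eventually_sub_le_rankedJump hf_mono hfn_mono hsk hj hjn k
          (half_pos hε)] with n hn
        rw [Real.dist_eq, sub_zero, abs_of_nonneg (le_max_right _ _), max_lt_iff]
        exact ⟨by linarith, hε⟩)
      (Eventually.of_forall fun n k => by
        rw [Real.norm_eq_abs, abs_of_nonneg (le_max_right _ _), max_le_iff]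
        have := (hjn n).2.1 k
        exact ⟨by linarith, hj.2.1 k⟩)
    simpa using hdom
  have hupper : Tendsto (fun n => fn n 1 - f 1 + 2 * ∑' k, max (j k - jn n k) 0) atTop
      (nhds 0) := by
    simpa using (hone.sub_const (f 1)).add (hdefect.const_mul 2)
  refine squeeze_zero (fun n => tsum_nonneg fun k => abs_nonneg _) (fun n => ?_) hupper
  have hmax : Summable fun k => max (j k - jn n k) 0 :=
    Summable.of_nonneg_of_le (fun k => le_max_right _ _)
      (fun k => max_le (by have := (hjn n).2.1 k; linarith) (hj.2.1 k)) hjs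
  have hsplit : ∀ k, |jn n k - j k| = jn n k - j k + 2 * max (j k - jn n k) 0 := by
    intro k
    rcases le_total (jn n k) (j k) with h | h
    · rw [abs_of_nonpos (by linarith), max_eq_left (by linarith)]
      ring
    · rw [abs_of_nonneg (by linarith), max_eq_right (by linarith)]
      ring
  rw [tsum_congr hsplit, (((hjns n).1.sub hjs)).tsum_add (hmax.mul_left 2),
    (hjns n).1.tsum_sub hjs, tsum_mul_left, hpure]
  have := (hjns n).2
  linarith
end

section
/- Let c > 0, t ≥ 0 and δ ∈ (0, 1/2), and let (p_n) be a sequence in (0,1) with √n · p_n → c as n → ∞. Then sup over integers x with 1 ≤ x ≤ ⌊(1−δ)n⌋ of | e^{−t/√n} (1 − x p_n (1−e^{−t/√n})/(n−x+x p_n))^{n−x−1} − exp(−x c t/n) | tends to 0 as n → ∞. -/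
/-!
Write `s = √n`, `h = 1 - e^(-t/s)`, `u = x pₙ h / (n - x + x pₙ)` and `k = n - x - 1`.
Since `x ≤ (1 - δ) n`, the denominator of `u` is at least `δ n`, so `0 ≤ u ≤ pₙ h / δ`.

* Both `1 - u` and `e^(-u)` lie in `[0, 1]` and differ by at most `u²`, so
  `|(1 - u)^k - e^(-uk)| ≤ k u² ≤ (s pₙ)² h² / δ²` (`abs_one_sub_pow_sub_exp_le`).
* As `e^(-·)` is 1-Lipschitz on `[0, ∞)` (`abs_exp_neg_sub_exp_neg_le`), it remains to compare
  the exponents `t/s + uk` and `x c t / n`. The term `t/s` is small, `uk` differs from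
  `x pₙ h` by at most `(h + (s pₙ)² h) / δ`, and `x pₙ h` differs from `x c t / n` by
  at most `|s pₙ · s h - c t|`.

These bounds do not involve `x` (`laplace_error_le`), and they tend to `0` because `s pₙ → c`,
`h → 0` and `s h → t`.
-/

open Filter

lemma abs_exp_neg_sub_exp_neg_le {a b : ℝ} (ha : 0 ≤ a) (hb : 0 ≤ b) :
    |Real.exp (-a) - Real.exp (-b)| ≤ |a - b| := by
  wlog hab : a ≤ b generalizing a b
  · rw [abs_sub_comm, abs_sub_comm a b]
    exact this hb ha (le_of_not_ge hab)
  have h1 : Real.exp (-b) ≤ Real.exp (-a) := Real.exp_le_exp.2 (by linarith)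
  have h2 : Real.exp (-b) = Real.exp (-a) * Real.exp (a - b) := by
    rw [← Real.exp_add]; congr 1; ring
  have h3 := Real.add_one_le_exp (a - b)
  have h4 : Real.exp (-a) ≤ 1 := Real.exp_le_one_iff.2 (by linarith)
  have h5 := Real.exp_pos (-a)
  rw [abs_of_nonneg (by linarith), abs_of_nonpos (by linarith), h2]
  nlinarith

lemma abs_one_sub_pow_sub_exp_le {u : ℝ} (hu0 : 0 ≤ u) (hu1 : u ≤ 1) (k : ℕ) :
    |(1 - u) ^ k - Real.exp (-(u * k))| ≤ k * u ^ 2 := by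
  have he : Real.exp (-(u * k)) = Real.exp (-u) ^ k := by
    rw [← Real.exp_nat_mul]; congr 1; ring
  have h1 : |1 - u - Real.exp (-u)| ≤ u ^ 2 := by
    have := Real.abs_exp_sub_one_sub_id_le (x := -u) (by rwa [abs_neg, abs_of_nonneg hu0])
    rw [abs_sub_comm]
    calc _ = |Real.exp (-u) - 1 - -u| := by congr 1; ring
      _ ≤ _ := by simpa using this
  have h2 : max |1 - u| |Real.exp (-u)| ≤ 1 := by
    refine max_le ?_ ?_
    · rw [abs_of_nonneg (by linarith)]; linarith
    · rw [abs_of_pos (Real.exp_pos _)]; exact Real.exp_le_one_iff.2 (by linarith)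
  rw [he]
  calc _ ≤ |1 - u - Real.exp (-u)| * k * max |1 - u| |Real.exp (-u)| ^ (k - 1) :=
        abs_pow_sub_pow_le _ _ _
    _ ≤ u ^ 2 * k * 1 := by
        gcongr
        exact pow_le_one₀ (le_max_of_le_left (abs_nonneg _)) h2
    _ = _ := by ring

/-- The error bound, uniform in `x`, for one fixed `n`: here `s` plays the role of `√n`, `q` of
`pₙ`, `h` of `1 - e^(-t/√n)` and `k` of `n - x - 1`. -/
lemma laplace_error_le {c t δ n x s q h : ℝ} {k : ℕ} (hc : 0 < c) (ht : 0 ≤ t) (hδ : 0 < δ)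
    (hs : 0 < s) (hsn : s ^ 2 = n) (hq0 : 0 < q) (hq1 : q < 1) (hh : h = 1 - Real.exp (-t / s))
    (hx0 : 0 ≤ x) (hx : x ≤ (1 - δ) * n) (hk : (k : ℝ) = n - x - 1) :
    |Real.exp (-t / s) * (1 - x * q * h / (n - x + x * q)) ^ k - Real.exp (-(x * c * t) / n)|
      ≤ (s * q) ^ 2 * h ^ 2 / δ ^ 2
        + (t / s + (h + (s * q) ^ 2 * h) / δ + |s * q * (s * h) - c * t|) := by
  have hn : 0 < n := by rw [← hsn]; positivity
  have hts : 0 ≤ t / s := by positivity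
  have hE0 := Real.exp_pos (-t / s)
  have hE1 : Real.exp (-t / s) ≤ 1 := Real.exp_le_one_iff.2 (by rw [neg_div]; linarith)
  have hh0 : 0 ≤ h := by linarith
  have hh1 : h ≤ 1 := by linarith
  have hδn : 0 < δ * n := by positivity
  have hxn : x ≤ n := by linarith
  have hxq : 0 ≤ x * q := by positivity
  have hD : δ * n ≤ n - x + x * q := by linarith
  have hD0 : 0 < n - x + x * q := by linarith
  set u := x * q * h / (n - x + x * q) with hu
  have hu0 : 0 ≤ u := by positivity
  have hu1 : u ≤ 1 := by
    rw [hu, div_le_one hD0]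
    have := mul_le_mul_of_nonneg_left hh1 hxq
    linarith
  have hud : u ≤ q * h / δ := by
    calc u ≤ n * q * h / (δ * n) := by rw [hu]; gcongr
      _ = q * h / δ := by field_simp
  have hpow : (k : ℝ) * u ^ 2 ≤ (s * q) ^ 2 * h ^ 2 / δ ^ 2 := by
    calc (k : ℝ) * u ^ 2 ≤ n * (q * h / δ) ^ 2 := by gcongr; linarith
      _ = _ := by rw [← hsn]; ring
  -- `n - x - 1 = (n - x + x q) - (1 + x q)`, so replacing `u k` by `x q h` costs this remainder
  have huk : u * k = x * q * h - x * q * h * (1 + x * q) / (n - x + x * q) := by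
    rw [hu, hk]; field_simp; ring
  have hrem0 : 0 ≤ x * q * h * (1 + x * q) / (n - x + x * q) := by positivity
  have hrem : x * q * h * (1 + x * q) / (n - x + x * q) ≤ (h + (s * q) ^ 2 * h) / δ := by
    calc _ ≤ n * q * h * (1 + n * q) / (δ * n) := by gcongr
      _ = (q * h + (s * q) ^ 2 * h) / δ := by rw [mul_pow, hsn]; field_simp
      _ ≤ _ := by
        gcongr
        nlinarith
  have hmain : |x * q * h - x * c * t / n| ≤ |s * q * (s * h) - c * t| := by
    have : x * q * h - x * c * t / n = x / n * (s * q * (s * h) - c * t) := by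
      have : s * q * (s * h) = n * q * h := by rw [← hsn]; ring
      rw [this]; field_simp
    rw [this, abs_mul, abs_of_nonneg (by positivity : 0 ≤ x / n)]
    exact mul_le_of_le_one_left (abs_nonneg _) ((div_le_one hn).2 hxn)
  have hA : |Real.exp (-t / s) * (1 - u) ^ k - Real.exp (-t / s) * Real.exp (-(u * k))|
      ≤ (s * q) ^ 2 * h ^ 2 / δ ^ 2 := by
    rw [← mul_sub, abs_mul, abs_of_pos hE0]
    calc _ ≤ 1 * |(1 - u) ^ k - Real.exp (-(u * k))| := by gcongr
      _ ≤ _ := by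
        rw [one_mul]
        exact (abs_one_sub_pow_sub_exp_le hu0 hu1 k).trans hpow
  have hB : |Real.exp (-t / s) * Real.exp (-(u * k)) - Real.exp (-(x * c * t) / n)|
      ≤ t / s + (h + (s * q) ^ 2 * h) / δ + |s * q * (s * h) - c * t| := by
    rw [← Real.exp_add, show -t / s + -(u * k) = -(t / s + u * k) by ring, neg_div]
    refine (abs_exp_neg_sub_exp_neg_le (by positivity) (by positivity)).trans ?_
    rw [huk]
    have h1 := abs_le.1 hmain
    rw [abs_le]
    constructor <;> linarith [h1.1, h1.2]
  exact (abs_sub_le _ _ _).trans (add_le_add hA hB)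

lemma tendsto_mul_one_sub_exp {t : ℝ} (ht : 0 ≤ t) :
    Tendsto (fun s : ℝ => s * (1 - Real.exp (-t / s))) atTop (nhds t) := by
  have hts : Tendsto (fun s : ℝ => t / s) atTop (nhds 0) := tendsto_const_nhds.div_atTop tendsto_id
  have hlow : Tendsto (fun s : ℝ => t / (1 + t / s)) atTop (nhds t) := by
    have h1 : Tendsto (fun s : ℝ => 1 + t / s) atTop (nhds 1) := by
      simpa using hts.const_add 1
    have h2 := (tendsto_const_nhds (x := t)).div h1 one_ne_zero
    rwa [div_one] at h2
  refine tendsto_of_tendsto_of_tendsto_of_le_of_le' hlow tendsto_const_nhds ?_ ?_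
  · filter_upwards [eventually_gt_atTop 0] with s hs
    have h0 : 0 ≤ t / s := by positivity
    have h1 : Real.exp (-t / s) ≤ 1 / (1 + t / s) := by
      rw [neg_div, Real.exp_neg, ← one_div]
      gcongr
      linarith [Real.add_one_le_exp (t / s)]
    calc t / (1 + t / s) = s * (1 - 1 / (1 + t / s)) := by
          have : s + t ≠ 0 := by positivity
          field_simp; ring
      _ ≤ _ := by gcongr
  · filter_upwards [eventually_gt_atTop 0] with s hs
    have h1 := Real.add_one_le_exp (-t / s)
    calc s * (1 - Real.exp (-t / s)) ≤ s * (t / s) := by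
          gcongr
          rw [neg_div] at h1 ⊢; linarith
      _ = t := by field_simp

/-- Key uniform estimate for the conditional Laplace transform of the rescaled number of
marks: if `√n pₙ → c > 0`, `t ≥ 0` and `δ ∈ (0, 1/2)`, then uniformly over integers
`1 ≤ x ≤ ⌊(1−δ)n⌋`,
`e^(−t/√n) (1 − x pₙ (1−e^(−t/√n))/(n−x+x pₙ))^(n−x−1) − exp(−xct/n) → 0`. -/
theorem stmt16 (c t δ : ℝ) (hc : 0 < c) (ht : 0 ≤ t) (hδ : δ ∈ Set.Ioo (0 : ℝ) (1 / 2))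
    (p : ℕ → ℝ) (hp : ∀ n, p n ∈ Set.Ioo (0 : ℝ) 1)
    (hpc : Tendsto (fun n : ℕ => Real.sqrt n * p n) atTop (nhds c)) :
    ∀ ε > 0, ∃ N : ℕ, ∀ n ≥ N, ∀ x : ℕ, 1 ≤ x → x ≤ Nat.floor ((1 - δ) * (n : ℝ)) →
      |Real.exp (-t / Real.sqrt n)
          * (1 - (x : ℝ) * p n * (1 - Real.exp (-t / Real.sqrt n))
              / ((n : ℝ) - (x : ℝ) + (x : ℝ) * p n)) ^ (n - x - 1)
        - Real.exp (-((x : ℝ) * c * t) / n)| < ε := by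
  intro ε hε
  obtain ⟨hδ0, hδ1⟩ := hδ
  have hs : Tendsto (fun n : ℕ => Real.sqrt n) atTop atTop :=
    Real.tendsto_sqrt_atTop.comp tendsto_natCast_atTop_atTop
  have hts : Tendsto (fun n : ℕ => t / Real.sqrt n) atTop (nhds 0) :=
    tendsto_const_nhds.div_atTop hs
  have hh : Tendsto (fun n : ℕ => 1 - Real.exp (-t / Real.sqrt n)) atTop (nhds 0) := by
    have h1 : Tendsto (fun n : ℕ => -t / Real.sqrt n) atTop (nhds 0) :=
      tendsto_const_nhds.div_atTop hs
    simpa using (tendsto_const_nhds (x := (1 : ℝ))).sub ((Real.continuous_exp.tendsto 0).comp h1)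
  have hsh := (tendsto_mul_one_sub_exp ht).comp hs
  have hlim := (((hpc.pow 2).mul (hh.pow 2)).div_const (δ ^ 2)).add
    ((hts.add ((hh.add ((hpc.pow 2).mul hh)).div_const δ)).add
      ((hpc.mul hsh).sub_const (c * t)).abs)
  simp only [ne_eq, OfNat.ofNat_ne_zero, not_false_eq_true, zero_pow, mul_zero, zero_div,
    add_zero, sub_self, abs_zero] at hlim
  obtain ⟨N, hN⟩ := eventually_atTop.1 (hlim.eventually_lt_const hε)
  refine ⟨max N 1, fun n hn x hx1 hx => ?_⟩
  have hn0 : (0 : ℝ) < n := by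
    exact_mod_cast (le_max_right N 1).trans hn
  have hx' : (x : ℝ) ≤ (1 - δ) * n :=
    (Nat.le_floor_iff (mul_nonneg (by linarith) hn0.le)).1 hx
  -- `x < n`, so the natural-number subtraction in the exponent does not truncate
  have hxn : x + 1 ≤ n := by
    have : (x : ℝ) < n := by nlinarith
    exact_mod_cast this
  have hk : ((n - x - 1 : ℕ) : ℝ) = (n : ℝ) - x - 1 := by
    rw [Nat.sub_sub, Nat.cast_sub hxn]; push_cast; ring
  exact (laplace_error_le hc ht hδ0 (Real.sqrt_pos.2 hn0) (Real.sq_sqrt hn0.le) (hp n).1 (hp n).2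
    rfl (Nat.cast_nonneg x) hx' hk).trans_lt (hN n ((le_max_left N 1).trans hn))
end

section
/- Let (p_n) be a sequence in (0,1) with n p_n → ∞ and √n · p_n → 0 as n → ∞, let c > 0 and x > 0, let (k_n) be a sequence of positive integers with p_n k_n → c, and set m_n = ⌊x (n p_n)^2⌋. Then (n p_n)^2 · (m_n − 1)(k_n − 1) · ((n−k_n−1)!/n^{n−k_n−1}) · (m_n^{m_n−1}/m_n!) · ((n−m_n)^{n−m_n−k_n}/((n−m_n−k_n+1)!)) converges to c (2π x)^{−1/2} exp(−c^2 x/2) as n → ∞. -/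
/-!
Write `a = n - k - 1`, `b = n - m - k + 1` and `N = n - m`, so that `m - a + b = 2`. Expressing the
three factorials through `Stirling.stirlingSeq` gives an exact identity (`density_eq`): the rescaled
density equals a product of factors with evident limits, namely `p (k - 1) → c`,
`n p / √(2 m) → 1 / √(2 x)`, the Stirling factors (contributing `1 / √π`) and quotients tending to
`1`, times the exponential of `2 + g (n, k + 1) - g (N, k - 1) + log (b / N)`, where
`g (t, y) = (t - y) log (1 - y / t)`.

The point is the limit of this exponent. The Taylor terms of `g (n, k + 1)` and `g (N, k - 1)` can
each diverge (`k ^ 3 / n ^ 2` need not be bounded), so the difference is taken first. With `u = y / t`,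
the partial derivatives are `∂g/∂t = log (1 - u) + u ∼ -u ^ 2 / 2` and
`∂g/∂y = -log (1 - u) - 1 → -1`. The mean value theorem along the segment from `(N, k - 1)` to
`(n, k + 1)` (`exists_slope`) therefore gives a difference of
`-m u ^ 2 / 2 - 2 + o(1)` for some `u ∼ k / n` (`tendsto_exponent`), and
`m (k / n) ^ 2 = (m / (n p) ^ 2) (p k) ^ 2 → x c ^ 2`.
-/

open Filter

/-- Mean value theorem for `g (t, y) = (t - y) log (1 - y / t)` along the segment from
`(N, k - 1)` to `(N + m, k + 1)`; `u` is the value of `y / t` at the intermediate point. -/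
lemma exists_slope (N m k : ℝ) (hm : 0 ≤ m) (hk : 1 ≤ k) (hN : k + 1 < N) :
    ∃ u : ℝ, (k - 1) / (N + m) ≤ u ∧ u ≤ (k + 1) / N ∧
      (N + m - (k + 1)) * Real.log (1 - (k + 1) / (N + m))
          - (N - (k - 1)) * Real.log (1 - (k - 1) / N)
        = m * (Real.log (1 - u) + u) + 2 * (-Real.log (1 - u) - 1) := by
  have hpos : ∀ s ∈ Set.Icc (0 : ℝ) 1, 0 < N + s * m ∧ k - 1 + 2 * s < N + s * m := by
    intro s hs
    have := mul_nonneg hs.1 hm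
    have := hs.2
    constructor <;> linarith
  have hder : ∀ s ∈ Set.Icc (0 : ℝ) 1, HasDerivAt
      (fun s : ℝ => (N + s * m - (k - 1 + 2 * s)) *
        Real.log (1 - (k - 1 + 2 * s) / (N + s * m)))
      (m * (Real.log (1 - (k - 1 + 2 * s) / (N + s * m)) + (k - 1 + 2 * s) / (N + s * m))
        + 2 * (-Real.log (1 - (k - 1 + 2 * s) / (N + s * m)) - 1)) s := by
    intro s hs
    obtain ⟨h1, h2⟩ := hpos s hs
    have h3 : 1 - (k - 1 + 2 * s) / (N + s * m) ≠ 0 := by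
      have := (div_lt_one h1).2 h2
      linarith
    have d1 : HasDerivAt (fun s : ℝ => N + s * m) m s := by
      simpa using ((hasDerivAt_id s).mul_const m).const_add N
    have d2 : HasDerivAt (fun s : ℝ => k - 1 + 2 * s) 2 s := by
      simpa using ((hasDerivAt_id s).const_mul 2).const_add (k - 1)
    have d3 := (d1.sub d2).mul ((((d2.div d1 h1.ne').const_sub 1)).log h3)
    refine d3.congr_deriv ?_
    have h4 : N + s * m - (k - 1 + 2 * s) ≠ 0 := by linarith
    have h5 : 1 - (k - 1 + 2 * s) / (N + s * m) = (N + s * m - (k - 1 + 2 * s)) / (N + s * m) := by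
      field_simp
    have h6 : (N + s * m - (k - 1 + 2 * s)) * (-((2 * (N + s * m) - (k - 1 + 2 * s) * m) / (N + s * m) ^ 2) /
        (1 - (k - 1 + 2 * s) / (N + s * m))) = m * ((k - 1 + 2 * s) / (N + s * m)) - 2 := by
      rw [h5]
      have := h1.ne'
      generalize N + s * m = A at *
      generalize k - 1 + 2 * s = B at *
      field_simp
      ring
    simp only [Pi.sub_apply, Pi.div_apply]
    rw [h6]
    ring
  obtain ⟨s, hs, hs'⟩ := exists_hasDerivAt_eq_slope _ _ (zero_lt_one' ℝ)
    (fun s hs => (hder s hs).continuousAt.continuousWithinAt)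
    (fun s hs => hder s ⟨hs.1.le, hs.2.le⟩)
  have h1 : 0 < N + s * m := (hpos s ⟨hs.1.le, hs.2.le⟩).1
  have hsm : 0 ≤ s * m := mul_nonneg hs.1.le hm
  have hsm' : s * m ≤ m := mul_le_of_le_one_left hm hs.2.le
  refine ⟨(k - 1 + 2 * s) / (N + s * m), ?_, ?_, ?_⟩
  · have := hs.1
    gcongr; linarith
  · have := hs.2
    exact div_le_div₀ (by linarith) (by linarith) (by linarith) (by linarith)
  · rw [hs']
    ring_nf

/-- Limit of the exponent, with `n`, `m`, `k` arbitrary real sequences such that `k / n` and `m / n`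
vanish and `m (k / n) ^ 2 → L`. The hypotheses `hm1` and `hm2` bound the error made by
replacing `k ± 1` with `k` in that square. -/
lemma tendsto_exponent (n m k : ℕ → ℝ) (L : ℝ) (hn : ∀ᶠ i in atTop, 0 < n i)
    (hm : ∀ i, 0 ≤ m i) (hk : ∀ i, 1 ≤ k i)
    (h1n : Tendsto (fun i => 1 / n i) atTop (nhds 0))
    (hmn : Tendsto (fun i => m i / n i) atTop (nhds 0))
    (hkn : Tendsto (fun i => k i / n i) atTop (nhds 0))
    (hkm : Tendsto (fun i => m i * (k i / n i) ^ 2) atTop (nhds L))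
    (hm1 : Tendsto (fun i => m i * (k i / n i) * (1 / n i)) atTop (nhds 0))
    (hm2 : Tendsto (fun i => m i * (1 / n i) ^ 2) atTop (nhds 0)) :
    Tendsto (fun i => (n i - (k i + 1)) * Real.log (1 - (k i + 1) / n i)
      - (n i - m i - (k i - 1)) * Real.log (1 - (k i - 1) / (n i - m i)) + 2)
      atTop (nhds (-L / 2)) := by
  -- The mean value theorem applies only for large `i`; elsewhere `u i` is irrelevant.
  have hex : ∀ i, ∃ u : ℝ, (0 < n i ∧ k i + 1 < n i - m i) →
      ((k i - 1) / n i ≤ u ∧ u ≤ (k i + 1) / (n i - m i) ∧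
      (n i - (k i + 1)) * Real.log (1 - (k i + 1) / n i)
        - (n i - m i - (k i - 1)) * Real.log (1 - (k i - 1) / (n i - m i))
        = m i * (Real.log (1 - u) + u) + 2 * (-Real.log (1 - u) - 1)) := by
    intro i
    by_cases h : 0 < n i ∧ k i + 1 < n i - m i
    · obtain ⟨u, hu⟩ := exists_slope (n i - m i) (m i) (k i) (hm i) (hk i) h.2
      rw [sub_add_cancel] at hu
      exact ⟨u, fun _ => hu⟩
    · exact ⟨0, fun h' => absurd h' h⟩
  choose u hu using hex
  have hev : ∀ᶠ i in atTop, 0 < n i ∧ k i + 1 < n i - m i := by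
    have hs : Tendsto (fun i => m i / n i + k i / n i + 1 / n i) atTop (nhds 0) := by
      simpa using (hmn.add hkn).add h1n
    filter_upwards [hn, hs.eventually (gt_mem_nhds (zero_lt_one' ℝ))] with i hi h
    refine ⟨hi, ?_⟩
    rw [← add_div, ← add_div, div_lt_one hi] at h
    linarith
  have hfac : Tendsto (fun i => 1 - m i / n i) atTop (nhds 1) := by
    simpa using hmn.const_sub 1
  have hup : ∀ᶠ i in atTop, (k i + 1) / (n i - m i) = (k i / n i + 1 / n i) / (1 - m i / n i) := by
    filter_upwards [hev] with i hi
    have h0 := hi.1.ne'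
    rw [← add_div, one_sub_div h0, div_div_div_cancel_right₀ h0]
  have hu0 : Tendsto u atTop (nhds 0) := by
    have hU : Tendsto (fun i => (k i / n i + 1 / n i) / (1 - m i / n i)) atTop (nhds 0) := by
      have := (hkn.add h1n).div hfac one_ne_zero
      rwa [add_zero, zero_div] at this
    have hLo : Tendsto (fun i => k i / n i - 1 / n i) atTop (nhds 0) := by
      simpa using hkn.sub h1n
    refine tendsto_of_tendsto_of_tendsto_of_le_of_le' hLo hU ?_ ?_
    · filter_upwards [hev] with i hi
      rw [← sub_div]; exact (hu i hi).1
    · filter_upwards [hev, hup] with i hi hi'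
      rw [← hi']; exact (hu i hi).2.1
  have hu2 : Tendsto (fun i => m i * u i ^ 2) atTop (nhds L) := by
    have hU : Tendsto (fun i => m i * ((k i / n i + 1 / n i) / (1 - m i / n i)) ^ 2)
        atTop (nhds L) := by
      have := ((hkm.add (hm1.const_mul 2)).add hm2).div (hfac.pow 2) (by norm_num)
      simp only [mul_zero, add_zero, one_pow, div_one] at this
      refine this.congr fun i => ?_
      simp only [Pi.div_apply, div_pow]
      ring
    have hLo : Tendsto (fun i => m i * (k i / n i - 1 / n i) ^ 2) atTop (nhds L) := by
      have := (hkm.sub (hm1.const_mul 2)).add hm2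
      simp only [mul_zero, add_zero, sub_zero] at this
      exact this.congr fun i => by ring
    refine tendsto_of_tendsto_of_tendsto_of_le_of_le' hLo hU ?_ ?_
    · filter_upwards [hev] with i hi
      rw [← sub_div]
      have h1 := (hu i hi).1
      have h2 : 0 ≤ (k i - 1) / n i := div_nonneg (by linarith [hk i]) hi.1.le
      have := hm i
      gcongr
    · filter_upwards [hev, hup] with i hi hi'
      rw [← hi']
      have h1 := (hu i hi).1
      have h2 : 0 ≤ (k i - 1) / n i := div_nonneg (by linarith [hk i]) hi.1.le
      have h3 := (hu i hi).2.1
      have := hm i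
      have := h2.trans h1
      gcongr
  have hlog : Tendsto (fun i => Real.log (1 - u i)) atTop (nhds 0) := by
    have : Tendsto (fun i => 1 - u i) atTop (nhds 1) := by simpa using hu0.const_sub 1
    simpa using this.log one_ne_zero
  -- second-order Taylor remainder: `|log (1 - u) + u + u² / 2| ≤ 2 |u|³` once `|u| < 1 / 2`
  have herr : Tendsto (fun i => m i * (Real.log (1 - u i) + u i + u i ^ 2 / 2)) atTop (nhds 0) := by
    have hb : Tendsto (fun i => 2 * (m i * u i ^ 2 * |u i|)) atTop (nhds 0) := by
      simpa using (hu2.mul hu0.abs).const_mul 2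
    refine squeeze_zero_norm' ?_ hb
    have habs : Tendsto (fun i => |u i|) atTop (nhds 0) := by simpa using hu0.abs
    filter_upwards [habs.eventually (gt_mem_nhds (by norm_num : (0 : ℝ) < 1 / 2))] with i hi
    have h := Real.abs_log_sub_add_sum_range_le (x := u i) (by linarith) 2
    norm_num [Finset.sum_range_succ] at h
    rw [Real.norm_eq_abs, abs_mul, abs_of_nonneg (hm i)]
    have h2 : |u i| ^ 3 / (1 - |u i|) ≤ 2 * (u i ^ 2 * |u i|) := by
      rw [div_le_iff₀ (by linarith), ← sq_abs (u i)]
      nlinarith [pow_nonneg (abs_nonneg (u i)) 3]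
    have h3 : |Real.log (1 - u i) + u i + u i ^ 2 / 2| ≤ 2 * (u i ^ 2 * |u i|) := by
      refine le_trans (le_of_eq ?_) (h.trans h2)
      congr 1; ring
    calc _ ≤ m i * (2 * (u i ^ 2 * |u i|)) := mul_le_mul_of_nonneg_left h3 (hm i)
      _ = _ := by ring
  have hmain := (herr.sub (hu2.div_const 2)).sub (hlog.const_mul 2)
  have hL : (0 : ℝ) - L / 2 - 2 * 0 = -L / 2 := by ring
  rw [hL] at hmain
  refine hmain.congr' ?_
  filter_upwards [hev] with i hi
  rw [(hu i hi).2.2]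
  ring

/-- The definition of `Stirling.stirlingSeq`, solved for the factorial. -/
lemma factorial_eq (j : ℕ) (hj : j ≠ 0) : (Nat.factorial j : ℝ) =
    Stirling.stirlingSeq j * (Real.sqrt 2 * Real.sqrt j * ((j : ℝ) ^ j / Real.exp 1 ^ j)) := by
  have : (0 : ℝ) < j := by positivity
  rw [Stirling.stirlingSeq, Real.sqrt_mul zero_le_two, div_pow]
  field_simp

/-- The rescaled density, with `q` in place of `p`, rewritten exactly by means of the Stirling
sequence. The powers of `e` coming from the three factorials multiply to `e ^ 2`, which is the `2` in the
exponent; the final logarithm is there because `n - m` is raised to the power `b - 1`,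
where `b = n - m - k + 1`, rather than `b`. -/
lemma density_eq (n k m : ℕ) (q : ℝ) (hm : 1 ≤ m) (h : k + m + 1 < n) :
    ((n : ℝ) * q) ^ 2 *
          (((m : ℝ) - 1) * ((k : ℝ) - 1)
            * ((Nat.factorial (n - k - 1) : ℝ) / (n : ℝ) ^ (n - k - 1))
            * ((m : ℝ) ^ (m - 1) / (Nat.factorial m : ℝ))
            * (((n : ℝ) - (m : ℝ)) ^ (n - m - k)
                / (Nat.factorial (n - m - k + 1) : ℝ)))
    = Stirling.stirlingSeq (n - k - 1) /
        (Stirling.stirlingSeq (n - m - k + 1) * Stirling.stirlingSeq m)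
      * (Real.sqrt (n - (k + 1)) / Real.sqrt (n - m - (k - 1)))
      * (((m : ℝ) - 1) / m) * (q * (k - 1)) * (n * q / (Real.sqrt 2 * Real.sqrt m))
      * (n / (n - m - (k - 1)))
      * Real.exp (((n - (k + 1)) * Real.log (1 - (k + 1) / n)
          - (n - m - (k - 1)) * Real.log (1 - (k - 1) / (n - m)) + 2)
          + Real.log (1 - (k - 1) / (n - m))) := by
  -- substitutions that turn all truncated subtractions into sums
  obtain ⟨m, rfl⟩ : ∃ m', m = m' + 1 := ⟨m - 1, by omega⟩
  obtain ⟨d, rfl⟩ : ∃ d, n = d + (m + 1) + k := ⟨n - (m + 1) - k, by omega⟩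
  have hd : 2 ≤ d := by omega
  have e1 : d + (m + 1) + k - k - 1 = d + m := by omega
  have e2 : d + (m + 1) + k - (m + 1) - k = d := by omega
  have e3 : m + 1 - 1 = m := by omega
  rw [e1, e2, e3, factorial_eq (d + m) (by omega), factorial_eq (m + 1) (by omega),
    factorial_eq (d + 1) (by omega)]
  have c1 : ((d + (m + 1) + k : ℕ) : ℝ) - (k + 1) = ((d + m : ℕ) : ℝ) := by push_cast; ring
  have c2 : ((d + (m + 1) + k : ℕ) : ℝ) - ((m + 1 : ℕ) : ℝ) = ((d + k : ℕ) : ℝ) := by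
    push_cast; ring
  have c3 : ((d + k : ℕ) : ℝ) - ((k : ℝ) - 1) = ((d + 1 : ℕ) : ℝ) := by push_cast; ring
  have c4 : ((m + 1 : ℕ) : ℝ) - 1 = m := by push_cast; ring
  have hn0 : (0 : ℝ) < ((d + (m + 1) + k : ℕ) : ℝ) := by positivity
  have hN0 : (0 : ℝ) < ((d + k : ℕ) : ℝ) := by positivity
  have ha0 : (0 : ℝ) < ((d + m : ℕ) : ℝ) := by positivity
  have hb0 : (0 : ℝ) < ((d + 1 : ℕ) : ℝ) := by positivity
  have hm0 : (0 : ℝ) < ((m + 1 : ℕ) : ℝ) := by positivity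
  have c5 : (1 : ℝ) - (k + 1) / ((d + (m + 1) + k : ℕ) : ℝ)
      = ((d + m : ℕ) : ℝ) / ((d + (m + 1) + k : ℕ) : ℝ) := by
    rw [one_sub_div hn0.ne', c1]
  have c6 : (1 : ℝ) - (k - 1) / ((d + k : ℕ) : ℝ) = ((d + 1 : ℕ) : ℝ) / ((d + k : ℕ) : ℝ) := by
    rw [one_sub_div hN0.ne', c3]
  have hexp : Real.exp (((d + m : ℕ) : ℝ) *
        Real.log (((d + m : ℕ) : ℝ) / ((d + (m + 1) + k : ℕ) : ℝ))
        - ((d + 1 : ℕ) : ℝ) * Real.log (((d + 1 : ℕ) : ℝ) / ((d + k : ℕ) : ℝ)) + 2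
        + Real.log (((d + 1 : ℕ) : ℝ) / ((d + k : ℕ) : ℝ)))
      = (((d + m : ℕ) : ℝ) / ((d + (m + 1) + k : ℕ) : ℝ)) ^ (d + m)
        * Real.exp 1 ^ 2 / (((d + 1 : ℕ) : ℝ) / ((d + k : ℕ) : ℝ)) ^ d := by
    have h1 := Real.exp_nat_mul (Real.log (((d + m : ℕ) : ℝ) / ((d + (m + 1) + k : ℕ) : ℝ))) (d + m)
    have h2 := Real.exp_nat_mul (Real.log (((d + 1 : ℕ) : ℝ) / ((d + k : ℕ) : ℝ))) d
    have h3 := Real.exp_nat_mul 1 2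
    rw [Real.exp_log (by positivity)] at h1 h2
    rw [← h1, ← h2, ← h3, ← Real.exp_add, ← Real.exp_sub]
    congr 1
    push_cast
    ring
  rw [c1, c2, c3, c4, c5, c6, hexp, div_pow, div_pow]
  have s1 : Stirling.stirlingSeq (d + 1) ≠ 0 := (Stirling.stirlingSeq'_pos d).ne'
  have s2 : Stirling.stirlingSeq (m + 1) ≠ 0 := (Stirling.stirlingSeq'_pos m).ne'
  have r1 := (Real.sqrt_pos.2 hb0).ne'
  have r2 := (Real.sqrt_pos.2 hm0).ne'
  have he := (Real.exp_pos 1).ne'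
  generalize ((d + (m + 1) + k : ℕ) : ℝ) = n' at *
  generalize ((d + k : ℕ) : ℝ) = N' at *
  generalize ((d + m : ℕ) : ℝ) = a' at *
  generalize ((d + 1 : ℕ) : ℝ) = b' at *
  generalize ((m + 1 : ℕ) : ℝ) = m' at *
  field_simp
  ring

theorem stmt17 (p : ℕ → ℝ) (hp : ∀ n, p n ∈ Set.Ioo (0 : ℝ) 1)
    (hnp : Tendsto (fun n : ℕ => (n : ℝ) * p n) atTop atTop)
    (hsnp : Tendsto (fun n : ℕ => Real.sqrt n * p n) atTop (nhds 0))
    (c x : ℝ) (hc : 0 < c) (hx : 0 < x)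
    (k : ℕ → ℕ) (hk : ∀ n, 1 ≤ k n)
    (hkc : Tendsto (fun n => p n * (k n : ℝ)) atTop (nhds c))
    (m : ℕ → ℕ) (hm : ∀ n, m n = Nat.floor (x * ((n : ℝ) * p n) ^ 2)) :
    Tendsto (fun n : ℕ =>
        ((n : ℝ) * p n) ^ 2 *
          (((m n : ℝ) - 1) * ((k n : ℝ) - 1)
            * ((Nat.factorial (n - k n - 1) : ℝ) / (n : ℝ) ^ (n - k n - 1))
            * ((m n : ℝ) ^ (m n - 1) / (Nat.factorial (m n) : ℝ))
            * (((n : ℝ) - (m n : ℝ)) ^ (n - m n - k n)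
                / (Nat.factorial (n - m n - k n + 1) : ℝ))))
      atTop (nhds (c / Real.sqrt (2 * Real.pi * x) * Real.exp (-(c ^ 2 * x) / 2))) := by
  have hpos : ∀ n, 0 < p n := fun n => (hp n).1
  have hnpos : ∀ᶠ n : ℕ in atTop, (0 : ℝ) < n := by
    filter_upwards [eventually_gt_atTop 0] with n hn
    exact_mod_cast hn
  have h1n : Tendsto (fun n : ℕ => 1 / (n : ℝ)) atTop (nhds 0) := tendsto_one_div_atTop_nhds_zero_nat
  have hp0 : Tendsto p atTop (nhds 0) := by
    have hs : Tendsto (fun n : ℕ => (Real.sqrt n)⁻¹) atTop (nhds 0) :=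
      tendsto_inv_atTop_zero.comp (Real.tendsto_sqrt_atTop.comp tendsto_natCast_atTop_atTop)
    have := hsnp.mul hs
    rw [zero_mul] at this
    refine this.congr' ?_
    filter_upwards [hnpos] with n hn
    have := (Real.sqrt_pos.2 hn).ne'
    field_simp
  have hP2 : Tendsto (fun n : ℕ => ((n : ℝ) * p n) ^ 2) atTop atTop :=
    (tendsto_pow_atTop two_ne_zero).comp hnp
  have hmP : Tendsto (fun n : ℕ => (m n : ℝ) / ((n : ℝ) * p n) ^ 2) atTop (nhds x) := by
    simp only [hm]
    exact (tendsto_nat_floor_mul_div_atTop hx.le).comp hP2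
  have hmn : Tendsto (fun n : ℕ => (m n : ℝ) / n) atTop (nhds 0) := by
    have := hmP.mul (hsnp.pow 2)
    rw [zero_pow two_ne_zero, mul_zero] at this
    refine this.congr' ?_
    filter_upwards [hnpos] with n hn
    have := (hpos n).ne'
    rw [mul_pow (Real.sqrt _), Real.sq_sqrt hn.le]
    field_simp
  have hkn : Tendsto (fun n : ℕ => (k n : ℝ) / n) atTop (nhds 0) := by
    have := hkc.mul (tendsto_inv_atTop_zero.comp hnp)
    rw [mul_zero] at this
    refine this.congr' ?_
    filter_upwards [hnpos] with n hn
    have := (hpos n).ne'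
    simp only [Function.comp]
    field_simp
  have hE := tendsto_exponent (fun n => (n : ℝ)) (fun n => (m n : ℝ)) (fun n => (k n : ℝ))
    (x * c ^ 2) hnpos (fun n => Nat.cast_nonneg _) (fun n => by exact_mod_cast hk n) h1n hmn hkn
    (by
      refine (hmP.mul (hkc.pow 2)).congr' ?_
      filter_upwards [hnpos] with n hn
      have := (hpos n).ne'
      field_simp)
    (by
      have := (hmP.mul hkc).mul hp0
      rw [mul_zero] at this
      refine this.congr' ?_
      filter_upwards [hnpos] with n hn
      have := (hpos n).ne'
      field_simp)
    (by
      have := hmP.mul (hp0.pow 2)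
      rw [zero_pow two_ne_zero, mul_zero] at this
      refine this.congr' ?_
      filter_upwards [hnpos] with n hn
      have := (hpos n).ne'
      field_simp)
  have hmtop : Tendsto m atTop atTop := by
    rw [← tendsto_natCast_atTop_iff (R := ℝ)]
    refine (hmP.pos_mul_atTop hx hP2).congr' ?_
    filter_upwards [hnpos] with n hn
    have := (hpos n).ne'
    field_simp
  have hev : ∀ᶠ n : ℕ in atTop, k n + m n + 1 < n := by
    have hs : Tendsto (fun n : ℕ => (k n : ℝ) / n + m n / n + 1 / n) atTop (nhds 0) := by
      have := (hkn.add hmn).add h1n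
      rwa [add_zero, add_zero] at this
    filter_upwards [hnpos, hs.eventually (gt_mem_nhds (zero_lt_one' ℝ))] with n hn h
    rw [← add_div, ← add_div, div_lt_one hn] at h
    exact_mod_cast h
  -- `n - k - 1`, `n - m - k + 1` and `n - m` are all asymptotic to `n`.
  have ha : Tendsto (fun n : ℕ => ((n : ℝ) - (k n + 1)) / n) atTop (nhds 1) := by
    have := (hkn.const_sub 1).sub h1n
    rw [sub_zero, sub_zero] at this
    refine this.congr' ?_
    filter_upwards [hnpos] with n hn
    field_simp
    ring
  have hb : Tendsto (fun n : ℕ => ((n : ℝ) - m n - (k n - 1)) / n) atTop (nhds 1) := by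
    have := ((hmn.const_sub 1).sub hkn).add h1n
    rw [sub_zero, sub_zero, add_zero] at this
    refine this.congr' ?_
    filter_upwards [hnpos] with n hn
    field_simp
    ring
  have hN : Tendsto (fun n : ℕ => ((n : ℝ) - m n) / n) atTop (nhds 1) := by
    have := hmn.const_sub 1
    rw [sub_zero] at this
    refine this.congr' ?_
    filter_upwards [hnpos] with n hn
    field_simp
  have hatop : Tendsto (fun n : ℕ => n - k n - 1) atTop atTop := by
    rw [← tendsto_natCast_atTop_iff (R := ℝ)]
    refine (ha.pos_mul_atTop one_pos tendsto_natCast_atTop_atTop).congr' ?_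
    filter_upwards [hnpos, hev] with n hn h
    rw [Nat.sub_sub, Nat.cast_sub (by omega), div_mul_cancel₀ _ hn.ne']
    push_cast; ring
  have hbtop : Tendsto (fun n : ℕ => n - m n - k n + 1) atTop atTop := by
    rw [← tendsto_natCast_atTop_iff (R := ℝ)]
    refine (hb.pos_mul_atTop one_pos tendsto_natCast_atTop_atTop).congr' ?_
    filter_upwards [hnpos, hev] with n hn h
    rw [Nat.sub_sub, Nat.cast_add, Nat.cast_sub (by omega), div_mul_cancel₀ _ hn.ne']
    push_cast; ring
  have hS := Stirling.tendsto_stirlingSeq_sqrt_pi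
  have hpi : Real.sqrt Real.pi ≠ 0 := (Real.sqrt_pos.2 Real.pi_pos).ne'
  have hS' := (hS.comp hatop).div ((hS.comp hbtop).mul (hS.comp hmtop)) (mul_ne_zero hpi hpi)
  have hsqrt : Tendsto (fun n : ℕ => Real.sqrt (n - (k n + 1)) / Real.sqrt (n - m n - (k n - 1)))
      atTop (nhds 1) := by
    have := ha.sqrt.div hb.sqrt (by norm_num)
    rw [Real.sqrt_one, div_one] at this
    refine this.congr' ?_
    filter_upwards [hnpos] with n hn
    simp only [Pi.div_apply]
    rw [Real.sqrt_div' _ hn.le, Real.sqrt_div' _ hn.le,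
      div_div_div_cancel_right₀ (Real.sqrt_pos.2 hn).ne']
  have hm1 : Tendsto (fun n : ℕ => ((m n : ℝ) - 1) / m n) atTop (nhds 1) := by
    have := (tendsto_one_div_atTop_nhds_zero_nat (𝕜 := ℝ)).comp hmtop
    have := this.const_sub 1
    rw [sub_zero] at this
    refine this.congr' ?_
    filter_upwards [hmtop.eventually_gt_atTop 0] with n hn
    have : (0 : ℝ) < m n := by exact_mod_cast hn
    simp only [Function.comp]
    field_simp
  have hpk : Tendsto (fun n : ℕ => p n * ((k n : ℝ) - 1)) atTop (nhds c) := by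
    have := hkc.sub hp0
    rw [sub_zero] at this
    exact this.congr fun n => by ring
  have hPm : Tendsto (fun n : ℕ => n * p n / (Real.sqrt 2 * Real.sqrt (m n))) atTop
      (nhds (1 / (Real.sqrt 2 * Real.sqrt x))) := by
    have hne : Real.sqrt 2 * Real.sqrt x ≠ 0 := by positivity
    refine (tendsto_const_nhds.div (hmP.sqrt.const_mul (Real.sqrt 2)) hne).congr' ?_
    filter_upwards [hnpos] with n hn
    simp only [Pi.div_apply]
    have := mul_pos hn (hpos n)
    rw [Real.sqrt_div' _ (by positivity), Real.sqrt_sq this.le, ← mul_div_assoc, one_div_div]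
  have hnb : Tendsto (fun n : ℕ => (n : ℝ) / (n - m n - (k n - 1))) atTop (nhds 1) := by
    have := hb.inv₀ one_ne_zero
    rw [inv_one] at this
    exact this.congr fun n => inv_div _ _
  have hlog : Tendsto (fun n : ℕ => Real.log (1 - ((k n : ℝ) - 1) / (n - m n))) atTop (nhds 0) := by
    have := (hb.div hN one_ne_zero).log (by norm_num)
    rw [div_one, Real.log_one] at this
    refine this.congr' ?_
    filter_upwards [hnpos, hev] with n hn h
    have h' : (k n : ℝ) + m n + 1 < n := by exact_mod_cast h
    have h0 : (n : ℝ) - m n ≠ 0 := by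
      have : (0 : ℝ) ≤ k n := Nat.cast_nonneg _
      linarith
    simp only [Pi.div_apply]
    rw [div_div_div_cancel_right₀ hn.ne', one_sub_div h0]
  have hexp := (Real.continuous_exp.tendsto _).comp (hE.add hlog)
  have hall := (((((hS'.mul hsqrt).mul hm1).mul hpk).mul hPm).mul hnb).mul hexp
  have hlim : Real.sqrt Real.pi / (Real.sqrt Real.pi * Real.sqrt Real.pi) * 1 * 1 * c *
      (1 / (Real.sqrt 2 * Real.sqrt x)) * 1 * Real.exp (-(x * c ^ 2) / 2 + 0)
      = c / Real.sqrt (2 * Real.pi * x) * Real.exp (-(c ^ 2 * x) / 2) := by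
    have : Real.sqrt x ≠ 0 := (Real.sqrt_pos.2 hx).ne'
    rw [Real.sqrt_mul (by positivity), Real.sqrt_mul zero_le_two, add_zero, mul_comm x]
    field_simp
  rw [hlim] at hall
  refine hall.congr' ?_
  filter_upwards [hev, hmtop.eventually_ge_atTop 1] with n hn hn'
  rw [density_eq n (k n) (m n) (p n) hn' hn]
  rfl
end

section
/- Let (m_n) and (k_n) be sequences of positive integers tending to infinity with m_n = o(n), k_n = o(n), k_n^3 m_n = o(n^3) and k_n^2 m_n^2 = o(n^3). Define F_n = (m_n − 1)(k_n − 1) · ((n−k_n−1)!/n^{n−k_n−1}) · (m_n^{m_n−1}/m_n!) · ((n−m_n)^{n−m_n−k_n}/((n−m_n−k_n+1)!)). Then √(2π) · (n √(m_n)/k_n) · exp(k_n^2 m_n/(2n^2)) · F_n converges to 1 as n → ∞. -/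
/-!
Write `N = n - k`, `M = n - m - k`, and let `s j = j! / (√(2j) (j/e)^j)` be Mathlib's `stirlingSeq`,
which tends to `√π`. Substituting Stirling's formula for the three factorials, the powers of `e`
cancel because `N = M + m`, and the quantity to be estimated becomes *exactly* (`stirling_identity`)
a product of factors which visibly tend to `1`, times
`exp (k² m / (2 n²) + ψ n - ψ (n - m))`, where `ψ t = (t - k) log (1 - k / t)`.

Since `ψ' t = log (1 - u) + u = -u²/2 + O(u³)` with `u = k / t`, the mean value theorem gives
`ψ n - ψ (n - m) = -k² m / (2 n²) + O(k³ m / n³ + k² m² / n³)` (`abs_psi_diff_le`), and the two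
error terms are those that the growth conditions make negligible.
-/

open Filter

open Stirling in
lemma factorial_eq_stirlingSeq (j : ℕ) (hj : 0 < j) :
    (j.factorial : ℝ)
      = stirlingSeq j * (Real.sqrt 2 * Real.sqrt j) * ((j : ℝ) ^ j / Real.exp j) := by
  have hj' : (0 : ℝ) < j := by exact_mod_cast hj
  have he : Real.exp 1 ^ j = Real.exp j := by rw [← Real.exp_nat_mul, mul_one]
  have h1 : 0 < Real.sqrt 2 := by positivity
  have h2 : 0 < Real.sqrt j := by positivity
  rw [stirlingSeq, div_pow, he, Real.sqrt_mul (by norm_num)]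
  field_simp

lemma stirlingSeq_pos {j : ℕ} (hj : 0 < j) : 0 < Stirling.stirlingSeq j := by
  obtain ⟨i, rfl⟩ := Nat.exists_eq_succ_of_ne_zero hj.ne'
  exact Stirling.stirlingSeq'_pos i

/-- The exact form of the quantity after Stirling's formula, with `n = M + m + k` and `N = M + m`. -/
lemma stirling_identity (M m k : ℕ) (hM : 0 < M) (hm : 0 < m) (hk : 0 < k) (E n N : ℝ)
    (hn : n = M + m + k) (hN : N = M + m) :
    Real.sqrt (2 * Real.pi) * (n * Real.sqrt m / (k : ℝ)) * Real.exp E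
      * (((m : ℝ) - 1) * ((k : ℝ) - 1)
        * ((Nat.factorial (M + m - 1) : ℝ) / n ^ (M + m - 1))
        * ((m : ℝ) ^ (m - 1) / (Nat.factorial m : ℝ))
        * ((n - (m : ℝ)) ^ M / (Nat.factorial (M + 1) : ℝ)))
    = (Real.sqrt Real.pi / Stirling.stirlingSeq m)
      * (Stirling.stirlingSeq (M + m) / Stirling.stirlingSeq M)
      * Real.sqrt (N / M) * (((m : ℝ) - 1) / m) * (((k : ℝ) - 1) / k)
      * (n ^ 2 / (N * (M + 1)))
      * Real.exp (E + (N * Real.log (N / n) - M * Real.log (M / (n - m)))) := by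
  have hM' : (0 : ℝ) < M := by exact_mod_cast hM
  have hm' : (0 : ℝ) < m := by exact_mod_cast hm
  have hk' : (0 : ℝ) < k := by exact_mod_cast hk
  have hn0 : 0 < n := by rw [hn]; positivity
  have hN0 : 0 < N := by rw [hN]; positivity
  have hnm : 0 < n - m := by rw [hn]; linarith
  have hNc : ((M + m : ℕ) : ℝ) = N := by rw [hN]; push_cast; rfl
  have e1 : Real.exp (N * Real.log (N / n)) = N ^ (M + m) / n ^ (M + m) := by
    rw [← hNc, Real.exp_nat_mul, hNc, Real.exp_log (by positivity), div_pow]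
  have e2 : Real.exp (M * Real.log (M / (n - m))) = (M : ℝ) ^ M / (n - m) ^ M := by
    rw [Real.exp_nat_mul, Real.exp_log (by positivity), div_pow]
  have f1 : ((M + m - 1).factorial : ℝ) = ((M + m).factorial : ℝ) / N := by
    rw [eq_div_iff hN0.ne', ← hNc, mul_comm]
    exact_mod_cast Nat.mul_factorial_pred (by omega)
  have f2 : ((M + 1).factorial : ℝ) = (M + 1) * (M.factorial : ℝ) := by
    rw [Nat.factorial_succ]; push_cast; rfl
  have p1 : n ^ (M + m - 1) = n ^ (M + m) / n := by
    rw [eq_div_iff hn0.ne', ← pow_succ]; congr 1; omega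
  have p2 : (m : ℝ) ^ (m - 1) = (m : ℝ) ^ m / m := by
    rw [eq_div_iff hm'.ne', ← pow_succ]; congr 1; omega
  have s1 := stirlingSeq_pos hM
  have s2 := stirlingSeq_pos hm
  have s3 := stirlingSeq_pos (show 0 < M + m by omega)
  rw [Real.exp_add, Real.exp_sub, e1, e2, f1, f2, p1, p2, factorial_eq_stirlingSeq _ hM,
    factorial_eq_stirlingSeq _ hm, factorial_eq_stirlingSeq (M + m) (by omega), hNc,
    Real.sqrt_mul (by norm_num), Real.sqrt_div hN0.le, hN, Real.exp_add, ← hN]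
  have q1 : 0 < Real.sqrt 2 := by positivity
  have q2 : 0 < Real.sqrt m := by positivity
  have q3 : 0 < Real.sqrt M := by positivity
  have r1 : 0 < n ^ (M + m) := by positivity
  have r2 : 0 < N ^ (M + m) := by positivity
  have r3 : 0 < (m : ℝ) ^ m := by positivity
  have r4 : 0 < (M : ℝ) ^ M := by positivity
  have r5 : 0 < (n - m) ^ M := by positivity
  generalize n ^ (M + m) = P1 at *
  generalize N ^ (M + m) = P2 at *
  generalize (m : ℝ) ^ m = P3 at *
  generalize (M : ℝ) ^ M = P4 at *
  generalize (n - m) ^ M = P5 at *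
  field_simp

/-- Second-order mean value estimate for `ψ t = (t - k) log (1 - k / t)`, in the form
`(t - k) log ((t - k) / t)`, between `n - m` and `n`. -/
lemma abs_psi_diff_le (n m k : ℝ) (hm : 0 < m) (hk : 0 < k) (hmn : m ≤ n / 4) (hkn : k ≤ n / 4) :
    |k ^ 2 * m / (2 * n ^ 2) + ((n - k) * Real.log ((n - k) / n)
      - (n - m - k) * Real.log ((n - m - k) / (n - m)))|
      ≤ 4 * (k ^ 3 * m / n ^ 3) + 4 * (k ^ 2 * m ^ 2 / n ^ 3) := by
  have hn : 0 < n := by linarith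
  have hder : ∀ t ∈ Set.Icc (n - m) n, HasDerivAt (fun t => (t - k) * Real.log ((t - k) / t))
      (Real.log (1 - k / t) + k / t) t := by
    intro t ht
    have ht0 : 0 < t := by linarith [ht.1]
    have htk : 0 < t - k := by linarith [ht.1]
    have h1 : HasDerivAt (fun t : ℝ => t - k) 1 t := (hasDerivAt_id t).sub_const k
    have h2 := (h1.div (hasDerivAt_id t) ht0.ne').log (div_pos htk ht0).ne'
    refine (h1.mul h2).congr_deriv ?_
    have : 1 - k / t = (t - k) / t := by field_simp
    simp only [id, Pi.div_apply, this]
    field_simp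
    ring
  obtain ⟨t, ht, hval⟩ := exists_hasDerivAt_eq_slope
    (fun t => (t - k) * Real.log ((t - k) / t)) (fun t => Real.log (1 - k / t) + k / t)
    (show n - m < n by linarith)
    (fun t ht => (hder t ht).continuousAt.continuousWithinAt)
    (fun t ht => hder t (Set.Ioo_subset_Icc_self ht))
  have ht1 : 3 / 4 * n < t := by linarith [ht.1]
  have ht0 : 0 < t := by linarith
  have htn : t < n := ht.2
  rw [eq_div_iff (by linarith)] at hval
  rw [← hval]
  set u := k / t with hu
  have hu0 : 0 < u := by positivity
  have hu1 : u ≤ 1 / 3 := by rw [hu, div_le_iff₀ ht0]; linarith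
  have hun : u ≤ 4 / 3 * (k / n) := by
    rw [hu, div_le_iff₀ ht0]
    calc k = 4 / 3 * (k / n) * (3 / 4 * n) := by field_simp
      _ ≤ 4 / 3 * (k / n) * t := by gcongr
  have hlog : |Real.log (1 - u) + u + u ^ 2 / 2| ≤ 3 / 2 * u ^ 3 := by
    have := Real.abs_log_sub_add_sum_range_le (x := u) (by rw [abs_of_pos hu0]; linarith) 2
    rw [abs_of_pos hu0] at this
    norm_num [Finset.sum_range_succ] at this
    calc _ = |u + u ^ 2 / 2 + Real.log (1 - u)| := by congr 1; ring
      _ ≤ _ := this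
      _ ≤ _ := by
        rw [div_le_iff₀ (by linarith)]
        nlinarith [pow_pos hu0 3]
  have hsq : |(k / n) ^ 2 - u ^ 2| ≤ 4 * (k ^ 2 * m / n ^ 3) := by
    have hle : k / n ≤ u := by rw [hu]; gcongr
    have hkn0 : 0 < k / n := by positivity
    have hd : u - k / n ≤ 4 / 3 * (k / n) * (m / n) := by
      have : u - k / n = u * ((n - t) / n) := by rw [hu]; field_simp
      rw [this]
      gcongr
      linarith [ht.1]
    rw [abs_sub_comm, abs_of_nonneg (by nlinarith)]
    calc u ^ 2 - (k / n) ^ 2 = (u - k / n) * (u + k / n) := by ring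
      _ ≤ (4 / 3 * (k / n) * (m / n)) * (4 / 3 * (k / n) + k / n) := by gcongr
      _ = 28 / 9 * (k ^ 2 * m / n ^ 3) := by field_simp; norm_num
      _ ≤ _ := by gcongr; norm_num
  have hcube : m * (3 / 2 * u ^ 3) ≤ 4 * (k ^ 3 * m / n ^ 3) := by
    calc m * (3 / 2 * u ^ 3) ≤ m * (3 / 2 * (4 / 3 * (k / n)) ^ 3) := by gcongr
      _ = 32 / 9 * (k ^ 3 * m / n ^ 3) := by field_simp; norm_num
      _ ≤ _ := by gcongr; norm_num
  calc _ = |m * (Real.log (1 - u) + u + u ^ 2 / 2) + m / 2 * ((k / n) ^ 2 - u ^ 2)| := by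
        congr 1; field_simp; ring
    _ ≤ m * |Real.log (1 - u) + u + u ^ 2 / 2| + m / 2 * |(k / n) ^ 2 - u ^ 2| := by
        refine (abs_add_le _ _).trans_eq ?_
        rw [abs_mul, abs_mul, abs_of_pos hm, abs_of_pos (half_pos hm)]
    _ ≤ m * (3 / 2 * u ^ 3) + m / 2 * (4 * (k ^ 2 * m / n ^ 3)) := by gcongr
    _ ≤ 4 * (k ^ 3 * m / n ^ 3) + 4 * (k ^ 2 * m ^ 2 / n ^ 3) := by
        have : m / 2 * (4 * (k ^ 2 * m / n ^ 3)) = 2 * (k ^ 2 * m ^ 2 / n ^ 3) := by ring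
        have h0 : 0 ≤ k ^ 2 * m ^ 2 / n ^ 3 := by positivity
        linarith

lemma tendsto_sub_one_div_self (m : ℕ → ℕ) (hm : Tendsto m atTop atTop) :
    Tendsto (fun n => ((m n : ℝ) - 1) / m n) atTop (nhds 1) := by
  have h := (tendsto_inv_atTop_zero.comp (tendsto_natCast_atTop_atTop (R := ℝ))).comp hm
  have h' := h.const_sub 1
  rw [sub_zero] at h'
  refine h'.congr' ?_
  filter_upwards [hm.eventually_gt_atTop 0] with n hn
  have : (0 : ℝ) < m n := by exact_mod_cast hn
  simp only [Function.comp]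
  field_simp

/-- Stirling-type asymptotic: if `mₙ, kₙ → ∞` with `mₙ = o(n)`, `kₙ = o(n)`,
`kₙ³ mₙ = o(n³)` and `kₙ² mₙ² = o(n³)`, and
`Fₙ = (mₙ−1)(kₙ−1) ((n−kₙ−1)!/n^(n−kₙ−1)) (mₙ^(mₙ−1)/mₙ!) ((n−mₙ)^(n−mₙ−kₙ)/(n−mₙ−kₙ+1)!)`,
then `√(2π) (n √mₙ / kₙ) exp(kₙ² mₙ/(2n²)) Fₙ → 1`. -/
theorem stmt18 (m k : ℕ → ℕ)
    (hm_top : Tendsto m atTop atTop)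
    (hk_top : Tendsto k atTop atTop)
    (hm_small : Tendsto (fun n : ℕ => (m n : ℝ) / (n : ℝ)) atTop (nhds 0))
    (hk_small : Tendsto (fun n : ℕ => (k n : ℝ) / (n : ℝ)) atTop (nhds 0))
    (h3 : Tendsto (fun n : ℕ => (k n : ℝ) ^ 3 * (m n : ℝ) / (n : ℝ) ^ 3) atTop (nhds 0))
    (h4 : Tendsto (fun n : ℕ => (k n : ℝ) ^ 2 * (m n : ℝ) ^ 2 / (n : ℝ) ^ 3) atTop (nhds 0)) :
    Tendsto (fun n : ℕ =>
        Real.sqrt (2 * Real.pi) * ((n : ℝ) * Real.sqrt (m n) / (k n : ℝ))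
          * Real.exp ((k n : ℝ) ^ 2 * (m n : ℝ) / (2 * (n : ℝ) ^ 2))
          * (((m n : ℝ) - 1) * ((k n : ℝ) - 1)
            * ((Nat.factorial (n - k n - 1) : ℝ) / (n : ℝ) ^ (n - k n - 1))
            * ((m n : ℝ) ^ (m n - 1) / (Nat.factorial (m n) : ℝ))
            * (((n : ℝ) - (m n : ℝ)) ^ (n - m n - k n)
                / (Nat.factorial (n - m n - k n + 1) : ℝ))))
      atTop (nhds 1) := by
  have h_ev : ∀ᶠ n : ℕ in atTop, 0 < n ∧ 0 < m n ∧ 0 < k n ∧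
      (m n : ℝ) ≤ n / 4 ∧ (k n : ℝ) ≤ n / 4 := by
    filter_upwards [eventually_gt_atTop 0, hm_top.eventually_gt_atTop 0,
      hk_top.eventually_gt_atTop 0, hm_small.eventually_le_const (show (0 : ℝ) < 1 / 4 by norm_num),
      hk_small.eventually_le_const (show (0 : ℝ) < 1 / 4 by norm_num)] with n hn h1 h2 h3 h4
    have hn' : (0 : ℝ) < n := by exact_mod_cast hn
    rw [div_le_iff₀ hn'] at h3 h4
    exact ⟨hn, h1, h2, by linarith, by linarith⟩
  have hMcast : ∀ᶠ n : ℕ in atTop, ((n - m n - k n : ℕ) : ℝ) = n - m n - k n := by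
    filter_upwards [h_ev] with n ⟨hn, h1, h2, h3, h4⟩
    have : ((m n + k n : ℕ) : ℝ) ≤ n := by push_cast; linarith [(Nat.cast_nonneg n : (0 : ℝ) ≤ n)]
    have : m n + k n ≤ n := by exact_mod_cast this
    rw [Nat.cast_sub (by omega), Nat.cast_sub (by omega)]
  have hM_top : Tendsto (fun n => n - m n - k n) atTop atTop := by
    rw [← tendsto_natCast_atTop_iff (R := ℝ)]
    refine tendsto_atTop_mono' _ ?_
      ((tendsto_natCast_atTop_atTop (R := ℝ)).atTop_div_const (show (0 : ℝ) < 2 by norm_num))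
    filter_upwards [h_ev, hMcast] with n ⟨hn, h1, h2, h3, h4⟩ hc
    rw [hc]; linarith
  have hN_top : Tendsto (fun n => n - m n - k n + m n) atTop atTop :=
    tendsto_atTop_mono (fun n => Nat.le_add_right _ _) hM_top
  have hS := Stirling.tendsto_stirlingSeq_sqrt_pi
  have hpi : Real.sqrt Real.pi ≠ 0 := by have := Real.pi_pos; positivity
  have a1 : Tendsto (fun n => Real.sqrt Real.pi / Stirling.stirlingSeq (m n)) atTop (nhds 1) := by
    rw [← div_self hpi]
    exact tendsto_const_nhds.div (hS.comp hm_top) hpi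
  have a2 : Tendsto (fun n => Stirling.stirlingSeq (n - m n - k n + m n)
      / Stirling.stirlingSeq (n - m n - k n)) atTop (nhds 1) := by
    rw [← div_self hpi]
    exact (hS.comp hN_top).div (hS.comp hM_top) hpi
  have hNn : Tendsto (fun n : ℕ => 1 - (k n : ℝ) / n) atTop (nhds 1) := by
    simpa using hk_small.const_sub 1
  have hMn : Tendsto (fun n : ℕ => 1 - (m n : ℝ) / n - (k n : ℝ) / n) atTop (nhds 1) := by
    simpa using (hm_small.const_sub 1).sub hk_small
  have a3 : Tendsto (fun n : ℕ => Real.sqrt (((n : ℝ) - k n) / (n - m n - k n : ℕ)))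
      atTop (nhds 1) := by
    have h := (hNn.div hMn one_ne_zero).sqrt
    rw [div_one, Real.sqrt_one] at h
    refine h.congr' ?_
    filter_upwards [h_ev, hMcast] with n ⟨hn, h1, h2, h3, h4⟩ hc
    have hn' : (0 : ℝ) < n := by exact_mod_cast hn
    have e1 : (1 : ℝ) - k n / n = (n - k n) / n := by field_simp
    have e2 : (1 : ℝ) - m n / n - k n / n = (n - m n - k n) / n := by field_simp
    rw [hc, Pi.div_apply, e1, e2, div_div_div_cancel_right₀ hn'.ne']
  have a4 := tendsto_sub_one_div_self m hm_top
  have a5 := tendsto_sub_one_div_self k hk_top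
  have a6 : Tendsto (fun n : ℕ => (n : ℝ) ^ 2 / (((n : ℝ) - k n) * ((n - m n - k n : ℕ) + 1)))
      atTop (nhds 1) := by
    have hinv : Tendsto (fun n : ℕ => (1 : ℝ) / n) atTop (nhds 0) :=
      tendsto_one_div_atTop_nhds_zero_nat
    have h := (hNn.mul (hMn.add hinv)).inv₀ (by norm_num)
    norm_num at h
    refine h.congr' ?_
    filter_upwards [h_ev, hMcast] with n ⟨hn, h1, h2, h3, h4⟩ hc
    have hn' : (0 : ℝ) < n := by exact_mod_cast hn
    have e1 : (1 : ℝ) - k n / n = (n - k n) / n := by field_simp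
    have e2 : (1 : ℝ) - m n / n - k n / n + (n : ℝ)⁻¹ = (n - m n - k n + 1) / n := by field_simp
    have p1 : (n : ℝ) - k n ≠ 0 := by linarith
    have p2 : (n : ℝ) - m n - k n + 1 ≠ 0 := by linarith
    rw [hc, e1, e2]
    field_simp
  have a7 : Tendsto (fun n : ℕ => Real.exp ((k n : ℝ) ^ 2 * (m n : ℝ) / (2 * (n : ℝ) ^ 2)
      + (((n : ℝ) - k n) * Real.log (((n : ℝ) - k n) / n)
        - (n - m n - k n : ℕ) * Real.log ((n - m n - k n : ℕ) / ((n : ℝ) - m n)))))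
      atTop (nhds 1) := by
    rw [← Real.exp_zero]
    refine (Real.continuous_exp.tendsto 0).comp ?_
    have hb := (h3.const_mul 4).add (h4.const_mul 4)
    norm_num only [mul_zero, add_zero] at hb
    refine squeeze_zero_norm' ?_ hb
    filter_upwards [h_ev, hMcast] with n ⟨hn, h1, h2, h3, h4⟩ hc
    rw [hc, Real.norm_eq_abs]
    exact abs_psi_diff_le n (m n) (k n) (by exact_mod_cast h1) (by exact_mod_cast h2) h3 h4
  have hall := (((((a1.mul a2).mul a3).mul a4).mul a5).mul a6).mul a7
  norm_num only [mul_one] at hall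
  refine hall.congr' ?_
  filter_upwards [h_ev, hMcast, hM_top.eventually_gt_atTop 0] with n ⟨hn, h1, h2, h3, h4⟩ hc hM
  have hid := stirling_identity (n - m n - k n) (m n) (k n) hM h1 h2
    ((k n : ℝ) ^ 2 * (m n : ℝ) / (2 * (n : ℝ) ^ 2)) n ((n : ℝ) - k n)
    (by rw [hc]; ring) (by rw [hc]; ring)
  have hidx : n - m n - k n + m n - 1 = n - k n - 1 := by omega
  rw [hidx] at hid
  exact hid.symm
end
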